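/- (Morawetz estimate) Let λ = 1, a > -1/4, 0 < b < 1, and let u be a smooth Schwartz solution of (INLS) with sup_{t∈ℝ} ‖u(t)‖_{H¹(ℝ³)} ≤ E for some E > 0. Then there exist constants C > 0 and R₀ > 1, depending only on a, b and E, such that for every T > 0 and every R ≥ R₀, (1/T) ∫_0^T ∫_{|x| ≤ R/4} |u(t,x)|⁴/|x|^b dx dt ≤ C ( R/T + R^{−b} ). -/

import Mathlib

open MeasureTheory Real Filter
open scoped BigOperators Topology

noncomputable section

/-- Three-dimensional Euclidean space. -/
abbrev E3 : Type := EuclideanSpace ℝ (Fin 3)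

/-- The `j`-th standard basis vector of `E3`. -/
def e3 (j : Fin 3) : E3 := EuclideanSpace.single j 1

/-- The `j`-th spatial partial derivative of a complex-valued function. -/
def pd (j : Fin 3) (f : E3 → ℂ) (x : E3) : ℂ := fderiv ℝ f x (e3 j)

/-- The `j`-th spatial partial derivative of a real-valued function. -/
def pdR (j : Fin 3) (w : E3 → ℝ) (x : E3) : ℝ := fderiv ℝ w x (e3 j)

/-- The Laplacian of a complex-valued function on `E3`. -/
def lap (f : E3 → ℂ) (x : E3) : ℂ := ∑ j : Fin 3, pd j (fun y => pd j f y) x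

/-- The Laplacian of a real-valued function on `E3`. -/
def lapR (w : E3 → ℝ) (x : E3) : ℝ := ∑ j : Fin 3, pdR j (fun y => pdR j w y) x

/-- Second partial derivatives `∂_j ∂_k w` of a real-valued function on `E3`. -/
def pdR2 (j k : Fin 3) (w : E3 → ℝ) (x : E3) : ℝ := pdR j (fun y => pdR k w y) x

/-- A smooth Schwartz solution of the inhomogeneous cubic NLS with inverse-square
potential: `i ∂ₜ u + Δu − (a/|x|²) u = λ |x|^{−b} |u|² u` on `ℝ × (ℝ³ \ {0})`,
with `u(t,·)` Schwartz for each time, and Schwartz seminorms of `u(t,·)`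
and `∂ₜ u(t,·)` locally uniformly bounded in `t`. -/
structure IsSchwartzSolution (a b lam : ℝ) (u : ℝ → E3 → ℂ) : Prop where
  smooth : ContDiff ℝ (⊤ : ℕ∞) (Function.uncurry u)
  schwartz : ∀ t : ℝ, ∃ f : SchwartzMap E3 ℂ, ∀ x : E3, f x = u t x
  schwartz_dt : ∀ t : ℝ, ∃ f : SchwartzMap E3 ℂ, ∀ x : E3,
      f x = deriv (fun s => u s x) t
  unif_bound : ∀ (k n : ℕ) (T : ℝ), 0 < T → ∃ C : ℝ, ∀ t ∈ Set.Icc (-T) T, ∀ x : E3,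
      ‖x‖ ^ k * ‖iteratedFDeriv ℝ n (u t) x‖
        + ‖x‖ ^ k * ‖iteratedFDeriv ℝ n (fun y => deriv (fun s => u s y) t) x‖ ≤ C
  eqn : ∀ (t : ℝ) (x : E3), x ≠ 0 →
      Complex.I * deriv (fun s => u s x) t + lap (u t) x
          - ((a / ‖x‖ ^ 2 : ℝ) : ℂ) * u t x
        = (lam : ℂ) * ((‖x‖ ^ (-b) : ℝ) : ℂ) * ((‖u t x‖ ^ 2 : ℝ) : ℂ) * u t x

theorem ld_mul {f g : E3 → ℝ} {f' g' : ℝ} {x v : E3} (hf : HasLineDerivAt ℝ f f' x v)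
    (hg : HasLineDerivAt ℝ g g' x v) :
    HasLineDerivAt ℝ (fun y => f y * g y) (f' * g x + f x * g') x v := by
  have := HasDerivAt.mul hf hg
  simpa [HasLineDerivAt, Pi.mul_def] using this

theorem ld_add {f g : E3 → ℝ} {f' g' : ℝ} {x v : E3} (hf : HasLineDerivAt ℝ f f' x v)
    (hg : HasLineDerivAt ℝ g g' x v) :
    HasLineDerivAt ℝ (fun y => f y + g y) (f' + g') x v :=
  HasDerivAt.add hf hg

theorem ld_sub {f g : E3 → ℝ} {f' g' : ℝ} {x v : E3} (hf : HasLineDerivAt ℝ f f' x v)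
    (hg : HasLineDerivAt ℝ g g' x v) :
    HasLineDerivAt ℝ (fun y => f y - g y) (f' - g') x v :=
  HasDerivAt.sub hf hg

theorem ld_smul {f : E3 → ℝ} {f' : ℝ} {x v : E3} (c : ℝ) (hf : HasLineDerivAt ℝ f f' x v) :
    HasLineDerivAt ℝ (fun y => c * f y) (c * f') x v :=
  HasDerivAt.const_mul c hf

theorem ld_pow {f : E3 → ℝ} {f' : ℝ} {x v : E3} (n : ℕ) (hf : HasLineDerivAt ℝ f f' x v) :
    HasLineDerivAt ℝ (fun y => f y ^ n) (n * f x ^ (n - 1) * f') x v := by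
  have := HasDerivAt.pow hf n
  simpa [HasLineDerivAt, Pi.pow_def] using this

theorem ld_rpow {f : E3 → ℝ} {f' : ℝ} {x v : E3} (r : ℝ) (hf : HasLineDerivAt ℝ f f' x v)
    (h : f x ≠ 0) :
    HasLineDerivAt ℝ (fun y => f y ^ r) (f' * r * f x ^ (r - 1)) x v := by
  have := HasDerivAt.rpow_const (p := r) hf (Or.inl (by simpa using h))
  simpa [HasLineDerivAt] using this

theorem ld_inv {f : E3 → ℝ} {f' : ℝ} {x v : E3} (hf : HasLineDerivAt ℝ f f' x v)
    (h : f x ≠ 0) :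
    HasLineDerivAt ℝ (fun y => (f y)⁻¹) (-f' / f x ^ 2) x v := by
  have := HasDerivAt.inv hf (by simpa using h)
  simpa [HasLineDerivAt, Pi.inv_def] using this

theorem ld_sum3 {f : Fin 3 → E3 → ℝ} {f' : Fin 3 → ℝ} {x v : E3}
    (hf : ∀ j, HasLineDerivAt ℝ (f j) (f' j) x v) :
    HasLineDerivAt ℝ (fun y => ∑ j, f j y) (∑ j, f' j) x v := by
  simp only [Fin.sum_univ_three]
  exact ld_add (ld_add (hf 0) (hf 1)) (hf 2)

theorem ld_congr {f : E3 → ℝ} {f' g' : ℝ} {x v : E3} (hf : HasLineDerivAt ℝ f f' x v)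
    (h : f' = g') : HasLineDerivAt ℝ f g' x v := h ▸ hf

theorem ld_coord (j k : Fin 3) (x : E3) :
    HasLineDerivAt ℝ (fun y : E3 => y j) (if j = k then 1 else 0) x (e3 k) := by
  have h := (hasFDerivAt_id (𝕜 := ℝ) x)
  have h2 := ((EuclideanSpace.proj (𝕜 := ℝ) j : E3 →L[ℝ] ℝ).hasFDerivAt (x := x)).hasLineDerivAt (e3 k)
  refine ld_congr h2 ?_
  simp [e3]

/-- squared norm in coordinates -/
theorem nsq (x : E3) : ‖x‖ ^ 2 = x 0 ^ 2 + x 1 ^ 2 + x 2 ^ 2 := by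
  rw [EuclideanSpace.norm_sq_eq]; simp [Fin.sum_univ_three]

theorem ld_nsq (k : Fin 3) (x : E3) :
    HasLineDerivAt ℝ (fun y : E3 => ‖y‖ ^ 2) (2 * x k) x (e3 k) := by
  simp only [nsq]
  refine ld_congr (ld_add (ld_add (ld_pow 2 (ld_coord 0 k x)) (ld_pow 2 (ld_coord 1 k x)))
    (ld_pow 2 (ld_coord 2 k x))) ?_
  fin_cases k <;> simp

def sg (R : ℝ) (x : E3) : ℝ := (√(R ^ 2 + ‖x‖ ^ 2))⁻¹
def om (R : ℝ) (j : Fin 3) (x : E3) : ℝ := x j * sg R x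
def ta (x : E3) : ℝ := (‖x‖ ^ 2)⁻¹
def gg (b : ℝ) (x : E3) : ℝ := ‖x‖ ^ (-b)

theorem sg_pos {R : ℝ} (hR : 0 < R) (x : E3) : 0 < sg R x := by
  unfold sg; positivity

theorem sg_sq {R : ℝ} (hR : 0 < R) (x : E3) : sg R x ^ 2 * (R ^ 2 + ‖x‖ ^ 2) = 1 := by
  unfold sg
  rw [inv_pow, Real.sq_sqrt (by positivity)]
  exact inv_mul_cancel₀ (by positivity)

theorem sg_le {R : ℝ} (hR : 0 < R) (x : E3) : sg R x ≤ R⁻¹ := by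
  unfold sg
  apply inv_anti₀ hR
  apply Real.le_sqrt_of_sq_le
  nlinarith [sq_nonneg ‖x‖]

theorem om_sum {R : ℝ} (hR : 0 < R) (x : E3) :
    om R 0 x ^ 2 + om R 1 x ^ 2 + om R 2 x ^ 2 = 1 - R ^ 2 * sg R x ^ 2 := by
  have := sg_sq hR x
  rw [nsq] at this
  unfold om; linear_combination this

theorem ld_sg {R : ℝ} (hR : 0 < R) (k : Fin 3) (x : E3) :
    HasLineDerivAt ℝ (sg R) (- om R k x * sg R x ^ 2) x (e3 k) := by
  have h1 : HasLineDerivAt ℝ (fun y : E3 => R ^ 2 + ‖y‖ ^ 2) (2 * x k) x (e3 k) :=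
    HasDerivAt.const_add _ (ld_nsq k x)
  have hpos : 0 < R ^ 2 + ‖x‖ ^ 2 := by positivity
  have h2 := HasDerivAt.sqrt h1 (by simpa using hpos.ne')
  have h3 : HasLineDerivAt ℝ (fun y : E3 => √(R ^ 2 + ‖y‖ ^ 2))
    (2 * x k / (2 * √(R ^ 2 + ‖x‖ ^ 2))) x (e3 k) := by simpa [HasLineDerivAt] using h2
  refine ld_congr (ld_inv h3 (by positivity)) ?_
  unfold om sg
  have : √(R ^ 2 + ‖x‖ ^ 2) ≠ 0 := by positivity
  field_simp

theorem ld_om {R : ℝ} (hR : 0 < R) (j k : Fin 3) (x : E3) :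
    HasLineDerivAt ℝ (om R j)
      ((if j = k then 1 else 0) * sg R x - om R j x * om R k x * sg R x) x (e3 k) := by
  refine ld_congr (ld_mul (ld_coord j k x) (ld_sg hR k x)) ?_
  unfold om; ring

theorem ta_mul {x : E3} (hx : x ≠ 0) : ta x * (x 0 ^ 2 + x 1 ^ 2 + x 2 ^ 2) = 1 := by
  have : ‖x‖ ≠ 0 := norm_ne_zero_iff.mpr hx
  rw [← nsq, ta]; exact inv_mul_cancel₀ (by positivity)

theorem ta_zero : ta 0 = 0 := by simp [ta]

theorem ld_ta (k : Fin 3) {x : E3} (hx : x ≠ 0) :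
    HasLineDerivAt ℝ ta (- 2 * x k * ta x ^ 2) x (e3 k) := by
  have : ‖x‖ ≠ 0 := norm_ne_zero_iff.mpr hx
  refine ld_congr (ld_inv (ld_nsq k x) (by positivity)) ?_
  unfold ta; field_simp

theorem gg_eq (b : ℝ) (x : E3) : gg b x = (‖x‖ ^ 2) ^ (-b / 2) := by
  unfold gg
  rw [← Real.rpow_natCast, ← Real.rpow_mul (norm_nonneg x)]
  congr 1; push_cast; ring

theorem ld_gg (b : ℝ) (k : Fin 3) {x : E3} (hx : x ≠ 0) :
    HasLineDerivAt ℝ (gg b) (- b * x k * ta x * gg b x) x (e3 k) := by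
  have h0 : 0 < ‖x‖ := norm_pos_iff.mpr hx
  have e : gg b = fun x => (‖x‖ ^ 2) ^ (-b / 2) := funext (gg_eq b)
  rw [e]
  refine ld_congr (ld_rpow _ (ld_nsq k x) (by positivity)) ?_
  rw [Real.rpow_sub_one (by positivity)]
  simp only [ta]; field_simp

theorem gg_nonneg (b : ℝ) (x : E3) : 0 ≤ gg b x := by unfold gg; positivity
theorem ta_nonneg (x : E3) : 0 ≤ ta x := by unfold ta; positivity

/-- measurable and bounded -/
def Bd (f : E3 → ℝ) : Prop := Measurable f ∧ ∃ C, ∀ x, |f x| ≤ C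
/-- measurable, bounded, integrable -/
def Nc (f : E3 → ℝ) : Prop := Bd f ∧ Integrable f

theorem Bd.mul {f g : E3 → ℝ} (hf : Bd f) (hg : Bd g) : Bd (fun x => f x * g x) := by
  obtain ⟨hf, C, hC⟩ := hf
  obtain ⟨hg, D, hD⟩ := hg
  refine ⟨hf.mul hg, C * D, fun x => ?_⟩
  rw [abs_mul]
  exact mul_le_mul (hC x) (hD x) (abs_nonneg _) ((abs_nonneg _).trans (hC x))
theorem Bd.add {f g : E3 → ℝ} (hf : Bd f) (hg : Bd g) : Bd (fun x => f x + g x) := by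
  obtain ⟨hf, C, hC⟩ := hf
  obtain ⟨hg, D, hD⟩ := hg
  exact ⟨hf.add hg, C + D, fun x => (abs_add_le _ _).trans (add_le_add (hC x) (hD x))⟩
theorem Bd.const (c : ℝ) : Bd (fun _ => c) := ⟨measurable_const, |c|, fun _ => le_rfl⟩
theorem Bd.neg {f : E3 → ℝ} (hf : Bd f) : Bd (fun x => - f x) := by
  obtain ⟨hf, C, hC⟩ := hf
  exact ⟨hf.neg, C, fun x => by simpa using hC x⟩
theorem Bd.sub {f g : E3 → ℝ} (hf : Bd f) (hg : Bd g) : Bd (fun x => f x - g x) := by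
  simpa only [sub_eq_add_neg] using hf.add hg.neg
theorem Bd.pow {f : E3 → ℝ} (hf : Bd f) (n : ℕ) : Bd (fun x => f x ^ n) := by
  obtain ⟨hf, C, hC⟩ := hf
  refine ⟨hf.pow_const n, C ^ n, fun x => ?_⟩
  rw [abs_pow]; exact pow_le_pow_left₀ (abs_nonneg _) (hC x) n

theorem Nc.mul {f g : E3 → ℝ} (hf : Nc f) (hg : Bd g) : Nc (fun x => f x * g x) := by
  refine ⟨hf.1.mul hg, ?_⟩
  obtain ⟨hg, D, hD⟩ := hg
  exact hf.2.mul_bdd (c := D) hg.aestronglyMeasurable (Eventually.of_forall hD)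
theorem Nc.mulr {f g : E3 → ℝ} (hf : Bd f) (hg : Nc g) : Nc (fun x => f x * g x) := by
  simpa only [mul_comm] using hg.mul hf
theorem Nc.add {f g : E3 → ℝ} (hf : Nc f) (hg : Nc g) : Nc (fun x => f x + g x) :=
  ⟨hf.1.add hg.1, hf.2.add hg.2⟩
theorem Nc.neg {f : E3 → ℝ} (hf : Nc f) : Nc (fun x => - f x) := ⟨hf.1.neg, hf.2.neg⟩
theorem Nc.sub {f g : E3 → ℝ} (hf : Nc f) (hg : Nc g) : Nc (fun x => f x - g x) :=
  ⟨hf.1.sub hg.1, hf.2.sub hg.2⟩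
theorem Nc.zero : Nc (fun _ => 0) := ⟨Bd.const 0, integrable_zero _ _ _⟩
theorem Nc.pow {f : E3 → ℝ} (hf : Nc f) (n : ℕ) : Nc (fun x => f x ^ (n + 1)) := by
  simp only [pow_succ]; exact Nc.mulr (hf.1.pow n) hf
theorem Nc.sum3 {f : Fin 3 → E3 → ℝ} (hf : ∀ j, Nc (f j)) : Nc (fun x => ∑ j, f j x) := by
  simp only [Fin.sum_univ_three]; exact ((hf 0).add (hf 1)).add (hf 2)
theorem Bd.sum3 {f : Fin 3 → E3 → ℝ} (hf : ∀ j, Bd (f j)) : Bd (fun x => ∑ j, f j x) := by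
  simp only [Fin.sum_univ_three]; exact ((hf 0).add (hf 1)).add (hf 2)

theorem meas_coord (j : Fin 3) : Measurable (fun x : E3 => x j) :=
  (EuclideanSpace.proj (𝕜 := ℝ) j : E3 →L[ℝ] ℝ).continuous.measurable
theorem abs_coord_le (j : Fin 3) (x : E3) : |x j| ≤ ‖x‖ := PiLp.norm_apply_le x j

theorem meas_sg (R : ℝ) : Measurable (sg R) := by unfold sg; fun_prop
theorem bd_sg {R : ℝ} (hR : 0 < R) : Bd (sg R) :=
  ⟨meas_sg R, R⁻¹, fun x => by rw [abs_of_pos (sg_pos hR x)]; exact sg_le hR x⟩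
theorem om_le {R : ℝ} (hR : 0 < R) (j : Fin 3) (x : E3) : |om R j x| ≤ 1 := by
  have := om_sum hR x
  have h2 : om R j x ^ 2 ≤ 1 := by
    have h : 0 ≤ R ^ 2 * sg R x ^ 2 := by positivity
    obtain rfl | rfl | rfl : j = 0 ∨ j = 1 ∨ j = 2 := by fin_cases j <;> simp
    all_goals nlinarith [sq_nonneg (om R 0 x), sq_nonneg (om R 1 x), sq_nonneg (om R 2 x)]
  exact (sq_le_one_iff_abs_le_one _).mp h2
theorem bd_om {R : ℝ} (hR : 0 < R) (j : Fin 3) : Bd (om R j) :=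
  ⟨(meas_coord j).mul (meas_sg R), 1, om_le hR j⟩
theorem meas_ta : Measurable ta := by unfold ta; fun_prop
theorem meas_gg (b : ℝ) : Measurable (gg b) := by unfold gg; fun_prop
theorem bd_xxt (k : Fin 3) : Bd (fun x => x k ^ 2 * ta x) := by
  refine ⟨((meas_coord k).pow_const 2).mul meas_ta, 1, fun x => ?_⟩
  have h := abs_coord_le k x
  rw [abs_of_nonneg (mul_nonneg (sq_nonneg _) (ta_nonneg x)), ta, ← div_eq_mul_inv]
  apply div_le_one_of_le₀ _ (by positivity)
  rw [← sq_abs]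
  gcongr

/-- if `p` is Lipschitz at zero -/
theorem bd_xtp (k : Fin 3) {p : E3 → ℝ} (hp : Measurable p) {L : ℝ} (hL : ∀ x, |p x| ≤ L * ‖x‖) :
    Bd (fun x => x k * ta x * p x) := by
  refine ⟨((meas_coord k).mul meas_ta).mul hp, |L|, fun x => ?_⟩
  by_cases hx : x = 0
  · simp [hx]
  have h0 : 0 < ‖x‖ := norm_pos_iff.mpr hx
  have h := abs_coord_le k x
  rw [abs_mul, abs_mul, abs_of_nonneg (ta_nonneg x), ta]
  calc |x k| * (‖x‖ ^ 2)⁻¹ * |p x| ≤ ‖x‖ * (‖x‖ ^ 2)⁻¹ * (|L| * ‖x‖) := by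
        gcongr
        exact (hL x).trans (by gcongr; exact le_abs_self L)
    _ = |L| := by field_simp

theorem bd_gp {b : ℝ} (hb0 : 0 < b) (hb1 : b < 1) {p : E3 → ℝ} (hp : Bd p) {L : ℝ}
    (hL : ∀ x, |p x| ≤ L * ‖x‖) : Bd (fun x => gg b x * p x) := by
  obtain ⟨hm, C, hC⟩ := hp
  refine ⟨(meas_gg b).mul hm, |L| + C, fun x => ?_⟩
  have hC0 : 0 ≤ C := (abs_nonneg _).trans (hC 0)
  rw [abs_mul, abs_of_nonneg (gg_nonneg b x)]
  by_cases hx : x = 0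
  · have := hL 0
    simp at this
    simp [hx, this]; positivity
  have h0 : 0 < ‖x‖ := norm_pos_iff.mpr hx
  rcases le_total ‖x‖ 1 with h1 | h1
  · calc gg b x * |p x| ≤ gg b x * (|L| * ‖x‖) := by
          gcongr
          · exact gg_nonneg b x
          exact (hL x).trans (by gcongr; exact le_abs_self L)
      _ = |L| * ‖x‖ ^ (1 - b) := by
          unfold gg; rw [sub_eq_neg_add, Real.rpow_add_one h0.ne']; ring
      _ ≤ |L| * 1 := by gcongr; exact Real.rpow_le_one h0.le h1 (by linarith)
      _ ≤ _ := by linarith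
  · calc gg b x * |p x| ≤ 1 * C := by
          gcongr
          · exact Real.rpow_le_one_of_one_le_of_nonpos h1 (by linarith)
          · exact hC x
      _ ≤ _ := by linarith [abs_nonneg L]

theorem ld_zero_of_sq {F : E3 → ℝ} {C : ℝ} (h : ∀ x, |F x| ≤ C * ‖x‖ ^ 2) (v : E3) :
    HasLineDerivAt ℝ F 0 0 v := by
  have hF : HasFDerivAt F (0 : E3 →L[ℝ] ℝ) 0 := by
    have h0 : F 0 = 0 := by have := h 0; simpa using this
    rw [hasFDerivAt_iff_isLittleO_nhds_zero]
    simp only [zero_add, h0, sub_zero, _root_.zero_apply]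
    have h1 : F =O[𝓝 0] fun x : E3 => ‖x‖ ^ 2 :=
      Asymptotics.IsBigO.of_bound C (Eventually.of_forall fun x => by simpa using h x)
    refine h1.trans_isLittleO ?_
    exact Asymptotics.isLittleO_norm_pow_id one_lt_two
  simpa using hF.hasLineDerivAt v

theorem int_ld_zero {f f' : E3 → ℝ} (k : Fin 3) (hf : Nc f) (hf' : Nc f')
    (h : ∀ x, HasLineDerivAt ℝ f (f' x) x (e3 k)) : ∫ x, f' x = 0 := by
  have := integral_bilinear_hasLineDerivAt_right_eq_neg_left_of_integrable
    (μ := (volume : Measure E3)) (f := fun _ => (1:ℝ)) (f' := fun _ => (0:ℝ)) (g := f) (g' := f') (v := e3 k)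
    (B := ContinuousLinearMap.mul ℝ ℝ) (by simp) (by simpa using hf'.2) (by simpa using hf.2)
    (fun x _ => hasDerivAt_const _ _) (fun x _ => h x)
  simpa using this

structure Snap (a b : ℝ) (p q pt qt : E3 → ℝ) (P Q Pt Qt : Fin 3 → E3 → ℝ)
    (PP QQ : Fin 3 → Fin 3 → E3 → ℝ) : Prop where
  np : Nc p
  nq : Nc q
  npt : Nc pt
  nqt : Nc qt
  nP : ∀ j, Nc (P j)
  nQ : ∀ j, Nc (Q j)
  nPt : ∀ j, Nc (Pt j)
  nQt : ∀ j, Nc (Qt j)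
  nPP : ∀ j k, Nc (PP j k)
  nQQ : ∀ j k, Nc (QQ j k)
  dp : ∀ k x, HasLineDerivAt ℝ p (P k x) x (e3 k)
  dq : ∀ k x, HasLineDerivAt ℝ q (Q k x) x (e3 k)
  dpt : ∀ k x, HasLineDerivAt ℝ pt (Pt k x) x (e3 k)
  dqt : ∀ k x, HasLineDerivAt ℝ qt (Qt k x) x (e3 k)
  dP : ∀ j k x, HasLineDerivAt ℝ (P j) (PP j k x) x (e3 k)
  dQ : ∀ j k x, HasLineDerivAt ℝ (Q j) (QQ j k x) x (e3 k)
  sP : ∀ j k x, PP j k x = PP k j x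
  sQ : ∀ j k x, QQ j k x = QQ k j x
  lip : ∃ L, ∀ x, |p x| ≤ L * ‖x‖ ∧ |q x| ≤ L * ‖x‖
  e1 : ∀ x, x ≠ 0 → - qt x + ∑ k, PP k k x - a * ta x * p x
    = gg b x * (p x ^ 2 + q x ^ 2) * p x
  e2 : ∀ x, x ≠ 0 → pt x + ∑ k, QQ k k x - a * ta x * q x
    = gg b x * (p x ^ 2 + q x ^ 2) * q x

/-! ### Smooth fields -/

def A0 (R : ℝ) (p q pt qt : E3 → ℝ) (k : Fin 3) (x : E3) : ℝ :=
  2 * (om R k x * (p x * qt x - q x * pt x))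
def A0' (R : ℝ) (p q pt qt : E3 → ℝ) (P Q Pt Qt : Fin 3 → E3 → ℝ) (k : Fin 3) (x : E3) : ℝ :=
  2 * ((sg R x - om R k x * om R k x * sg R x) * (p x * qt x - q x * pt x)
    + om R k x * (P k x * qt x + p x * Qt k x - (Q k x * pt x + q x * Pt k x)))

theorem ld_A0 {R : ℝ} (hR : 0 < R) {p q pt qt : E3 → ℝ} {P Q Pt Qt : Fin 3 → E3 → ℝ}
    (dp : ∀ k x, HasLineDerivAt ℝ p (P k x) x (e3 k))
    (dq : ∀ k x, HasLineDerivAt ℝ q (Q k x) x (e3 k))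
    (dpt : ∀ k x, HasLineDerivAt ℝ pt (Pt k x) x (e3 k))
    (dqt : ∀ k x, HasLineDerivAt ℝ qt (Qt k x) x (e3 k)) (k : Fin 3) (x : E3) :
    HasLineDerivAt ℝ (A0 R p q pt qt k) (A0' R p q pt qt P Q Pt Qt k x) x (e3 k) := by
  refine ld_congr (ld_smul 2 (ld_mul (ld_om hR k k x)
    (ld_sub (ld_mul (dp k x) (dqt k x)) (ld_mul (dq k x) (dpt k x))))) ?_
  simp [A0']

def AF (R : ℝ) (f : E3 → ℝ) (F : Fin 3 → E3 → ℝ) (k : Fin 3) (x : E3) : ℝ :=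
  -4 * ((∑ j, om R j x * F j x) * F k x) + 2 * (om R k x * ∑ j, F j x ^ 2)
  + (-2) * ((2 * sg R x + R ^ 2 * sg R x ^ 3) * (f x * F k x))
  + om R k x * ((-2 * sg R x ^ 2 + (-3 * R ^ 2) * sg R x ^ 4) * f x ^ 2)
def AF' (R : ℝ) (f : E3 → ℝ) (F : Fin 3 → E3 → ℝ) (FF : Fin 3 → Fin 3 → E3 → ℝ)
    (k : Fin 3) (x : E3) : ℝ :=
  -4 * ((∑ j, (((if j = k then 1 else 0) * sg R x - om R j x * om R k x * sg R x) * F j x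
      + om R j x * FF j k x)) * F k x + (∑ j, om R j x * F j x) * FF k k x)
  + 2 * ((sg R x - om R k x * om R k x * sg R x) * ∑ j, F j x ^ 2
      + om R k x * ∑ j, 2 * F j x * FF j k x)
  + (-2) * ((2 * (- om R k x * sg R x ^ 2) + R ^ 2 * (3 * sg R x ^ 2 * (- om R k x * sg R x ^ 2)))
        * (f x * F k x)
      + (2 * sg R x + R ^ 2 * sg R x ^ 3) * (F k x * F k x + f x * FF k k x))
  + ((sg R x - om R k x * om R k x * sg R x)
        * ((-2 * sg R x ^ 2 + (-3 * R ^ 2) * sg R x ^ 4) * f x ^ 2)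
      + om R k x * ((-2 * (2 * sg R x * (- om R k x * sg R x ^ 2))
          + (-3 * R ^ 2) * (4 * sg R x ^ 3 * (- om R k x * sg R x ^ 2))) * f x ^ 2
        + (-2 * sg R x ^ 2 + (-3 * R ^ 2) * sg R x ^ 4) * (2 * f x * F k x)))

theorem ld_AF {R : ℝ} (hR : 0 < R) {f : E3 → ℝ} {F : Fin 3 → E3 → ℝ}
    {FF : Fin 3 → Fin 3 → E3 → ℝ}
    (df : ∀ k x, HasLineDerivAt ℝ f (F k x) x (e3 k))
    (dF : ∀ j k x, HasLineDerivAt ℝ (F j) (FF j k x) x (e3 k)) (k : Fin 3) (x : E3) :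
    HasLineDerivAt ℝ (AF R f F k) (AF' R f F FF k x) x (e3 k) := by
  have s := ld_sg hR k x
  refine ld_congr (ld_add (ld_add (ld_add
    (ld_smul (-4) (ld_mul (ld_sum3 fun j => ld_mul (ld_om hR j k x) (dF j k x)) (dF k k x)))
    (ld_smul 2 (ld_mul (ld_om hR k k x) (ld_sum3 fun j => ld_pow 2 (dF j k x)))))
    (ld_smul (-2) (ld_mul (ld_add (ld_smul 2 s) (ld_smul (R^2) (ld_pow 3 s)))
      (ld_mul (df k x) (dF k k x)))))
    (ld_mul (ld_om hR k k x) (ld_mul (ld_add (ld_smul (-2) (ld_pow 2 s))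
      (ld_smul (-3*R^2) (ld_pow 4 s))) (ld_pow 2 (df k x))))) ?_
  simp [AF']

theorem sum_AF' {R : ℝ} (hR : 0 < R) {f : E3 → ℝ} {F : Fin 3 → E3 → ℝ}
    {FF : Fin 3 → Fin 3 → E3 → ℝ} (sF : ∀ j k x, FF j k x = FF k j x) (x : E3) :
    ∑ k, AF' R f F FF k x =
      -4 * (∑ j, om R j x * F j x) * (∑ k, FF k k x)
      - 2 * (2 * sg R x + R ^ 2 * sg R x ^ 3) * f x * (∑ k, FF k k x)
      - 4 * sg R x * (∑ j, F j x ^ 2 - (∑ j, om R j x * F j x) ^ 2)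
      - 15 * R ^ 4 * sg R x ^ 7 * f x ^ 2 := by
  have h := om_sum hR x
  have h10 := sF 1 0 x
  have h20 := sF 2 0 x
  have h21 := sF 2 1 x
  simp only [AF', Fin.sum_univ_three, h10, h20, h21]
  simp
  linear_combination (-2 * sg R x * (F 0 x ^ 2 + F 1 x ^ 2 + F 2 x ^ 2)
    + (6 * sg R x ^ 3 + 15 * R ^ 2 * sg R x ^ 5) * f x ^ 2) * h

theorem nc_A0 {R : ℝ} (hR : 0 < R) {p q pt qt : E3 → ℝ} (hp : Nc p) (hq : Nc q)
    (hpt : Nc pt) (hqt : Nc qt) (k : Fin 3) : Nc (A0 R p q pt qt k) :=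
  Nc.mulr (Bd.const 2) (Nc.mulr (bd_om hR k) ((hp.mul hqt.1).sub (hq.mul hpt.1)))

theorem nc_A0' {R : ℝ} (hR : 0 < R) {p q pt qt : E3 → ℝ} {P Q Pt Qt : Fin 3 → E3 → ℝ}
    (hp : Nc p) (hq : Nc q) (hpt : Nc pt) (hqt : Nc qt) (hP : ∀ k, Nc (P k)) (hQ : ∀ k, Nc (Q k))
    (hPt : ∀ k, Nc (Pt k)) (hQt : ∀ k, Nc (Qt k)) (k : Fin 3) :
    Nc (A0' R p q pt qt P Q Pt Qt k) :=
  Nc.mulr (Bd.const 2) ((Nc.mulr ((bd_sg hR).sub (((bd_om hR k).mul (bd_om hR k)).mul (bd_sg hR)))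
      ((hp.mul hqt.1).sub (hq.mul hpt.1))).add
    (Nc.mulr (bd_om hR k) ((((hP k).mul hqt.1).add (hp.mul (hQt k).1)).sub
      (((hQ k).mul hpt.1).add (hq.mul (hPt k).1)))))

theorem nc_AF {R : ℝ} (hR : 0 < R) {f : E3 → ℝ} {F : Fin 3 → E3 → ℝ}
    (hf : Nc f) (hF : ∀ k, Nc (F k)) (k : Fin 3) : Nc (AF R f F k) := by
  have s := bd_sg hR
  have o := bd_om hR
  exact (((Nc.mulr (Bd.const (-4)) ((Nc.sum3 fun j => Nc.mulr (o j) (hF j)).mul (hF k).1)).add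
    (Nc.mulr (Bd.const 2) (Nc.mulr (o k) (Nc.sum3 fun j => (hF j).pow 1)))).add
    (Nc.mulr (Bd.const (-2)) (Nc.mulr (((Bd.const 2).mul s).add ((Bd.const (R^2)).mul (s.pow 3)))
      (hf.mul (hF k).1)))).add
    (Nc.mulr (o k) (Nc.mulr (((Bd.const (-2)).mul (s.pow 2)).add
      ((Bd.const (-3 * R^2)).mul (s.pow 4))) (hf.pow 1)))

theorem nc_AF' {R : ℝ} (hR : 0 < R) {f : E3 → ℝ} {F : Fin 3 → E3 → ℝ}
    {FF : Fin 3 → Fin 3 → E3 → ℝ}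
    (hf : Nc f) (hF : ∀ k, Nc (F k)) (hFF : ∀ j k, Nc (FF j k)) (k : Fin 3) :
    Nc (AF' R f F FF k) := by
  have s := bd_sg hR
  have o := bd_om hR
  have so := s.sub (((o k).mul (o k)).mul s)
  have ds := (o k).neg.mul (s.pow 2)
  have cs := ((Bd.const (-2)).mul (s.pow 2)).add ((Bd.const (-3 * R^2)).mul (s.pow 4))
  exact (((Nc.mulr (Bd.const (-4)) (((Nc.sum3 fun j => (Nc.mulr (((Bd.const _).mul s).sub
        (((o j).mul (o k)).mul s)) (hF j)).add (Nc.mulr (o j) (hFF j k))).mul (hF k).1).add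
        ((Nc.sum3 fun j => Nc.mulr (o j) (hF j)).mul (hFF k k).1))).add
    (Nc.mulr (Bd.const 2) ((Nc.mulr so (Nc.sum3 fun j => (hF j).pow 1)).add
      (Nc.mulr (o k) (Nc.sum3 fun j => (Nc.mulr (Bd.const 2) (hF j)).mul (hFF j k).1))))).add
    (Nc.mulr (Bd.const (-2)) ((Nc.mulr (((Bd.const 2).mul ds).add ((Bd.const (R^2)).mul
      (((Bd.const 3).mul (s.pow 2)).mul ds))) (hf.mul (hF k).1)).add
      (Nc.mulr (((Bd.const 2).mul s).add ((Bd.const (R^2)).mul (s.pow 3)))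
      (((hF k).mul (hF k).1).add (hf.mul (hFF k k).1)))))).add
    ((Nc.mulr so (Nc.mulr cs (hf.pow 1))).add (Nc.mulr (o k) ((Nc.mulr
      (((Bd.const (-2)).mul (((Bd.const 2).mul s).mul ds)).add
        ((Bd.const (-3*R^2)).mul (((Bd.const 4).mul (s.pow 3)).mul ds))) (hf.pow 1)).add
      (Nc.mulr cs ((Nc.mulr (Bd.const 2) hf).mul (hF k).1)))))

/-! ### Singular fields -/

def hh (b : ℝ) (p q : E3 → ℝ) (x : E3) : ℝ := gg b x * (p x ^ 2 + q x ^ 2) ^ 2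
def ka (p q : E3 → ℝ) (x : E3) : ℝ := (p x ^ 2 + q x ^ 2) * ta x

def B' (R b : ℝ) (p q : E3 → ℝ) (P Q : Fin 3 → E3 → ℝ) (k : Fin 3) (x : E3) : ℝ :=
  (sg R x - om R k x * om R k x * sg R x) * hh b p q x
  + (- b * (sg R x * (x k ^ 2 * ta x)) * hh b p q x
    + 4 * (om R k x * ((gg b x * p x * p x + gg b x * q x * q x)
        * (p x * P k x + q x * Q k x))))

def S (R a ε : ℝ) (p q : E3 → ℝ) (k : Fin 3) (x : E3) : ℝ :=
  (2 * a - 2 * ε * R ^ 2 * sg R x ^ 2) * (om R k x * ka p q x)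
def S' (R a ε : ℝ) (p q : E3 → ℝ) (P Q : Fin 3 → E3 → ℝ) (k : Fin 3) (x : E3) : ℝ :=
  (4 * ε * R ^ 2 * (om R k x * om R k x * sg R x ^ 3)
    + (2 * a - 2 * ε * R ^ 2 * sg R x ^ 2) * (sg R x - om R k x * om R k x * sg R x)) * ka p q x
  + (2 * a - 2 * ε * R ^ 2 * sg R x ^ 2) * (2 * sg R x * (x k * ta x * p x * P k x
      + x k * ta x * q x * Q k x) - 2 * (sg R x * (x k ^ 2 * ta x)) * ka p q x)

section
variable {a b : ℝ} {p q pt qt : E3 → ℝ} {P Q Pt Qt : Fin 3 → E3 → ℝ}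
    {PP QQ : Fin 3 → Fin 3 → E3 → ℝ}

theorem Snap.zero (h : Snap a b p q pt qt P Q Pt Qt PP QQ) : p 0 = 0 ∧ q 0 = 0 := by
  obtain ⟨L, hL⟩ := h.lip
  have := hL 0
  simpa using this

theorem Snap.gp (h : Snap a b p q pt qt P Q Pt Qt PP QQ) (hb0 : 0 < b) (hb1 : b < 1) :
    Bd (fun x => gg b x * p x) ∧ Bd (fun x => gg b x * q x) := by
  obtain ⟨L, hL⟩ := h.lip
  exact ⟨bd_gp hb0 hb1 h.np.1 fun x => (hL x).1, bd_gp hb0 hb1 h.nq.1 fun x => (hL x).2⟩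

theorem Snap.nc_hh (h : Snap a b p q pt qt P Q Pt Qt PP QQ) (hb0 : 0 < b) (hb1 : b < 1) :
    Nc (hh b p q) := by
  obtain ⟨g1, g2⟩ := h.gp hb0 hb1
  have := ((Nc.mulr g1 h.np).add (Nc.mulr g2 h.nq)).mul ((h.np.1.pow 2).add (h.nq.1.pow 2))
  convert this using 2 with x
  simp only [hh]; ring

theorem Snap.hh_le (h : Snap a b p q pt qt P Q Pt Qt PP QQ) (hb0 : 0 < b) (hb1 : b < 1) :
    ∃ C, ∀ x, |hh b p q x| ≤ C * ‖x‖ := by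
  obtain ⟨L, hL⟩ := h.lip
  obtain ⟨g1, g2⟩ := h.gp hb0 hb1
  obtain ⟨-, C, hC⟩ := g1.mul ((h.np.1.pow 2).add (h.nq.1.pow 2))
  obtain ⟨-, D, hD⟩ := g2.mul ((h.np.1.pow 2).add (h.nq.1.pow 2))
  refine ⟨C * L + D * L, fun x => ?_⟩
  have : hh b p q x = gg b x * p x * (p x ^ 2 + q x ^ 2) * p x
    + gg b x * q x * (p x ^ 2 + q x ^ 2) * q x := by simp only [hh]; ring
  rw [this]
  refine (abs_add_le _ _).trans ?_
  rw [abs_mul _ (p x), abs_mul _ (q x), add_mul, mul_assoc C, mul_assoc D]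
  exact add_le_add (mul_le_mul (hC x) (hL x).1 (abs_nonneg _) ((abs_nonneg _).trans (hC x)))
    (mul_le_mul (hD x) (hL x).2 (abs_nonneg _) ((abs_nonneg _).trans (hD x)))

theorem Snap.ka_eq (h : Snap a b p q pt qt P Q Pt Qt PP QQ) (x : E3) :
    a * ka p q x = p x * (∑ k, PP k k x - qt x) + q x * (∑ k, QQ k k x + pt x) - hh b p q x := by
  by_cases hx : x = 0
  · subst hx; simp [ka, hh, h.zero.1, h.zero.2]
  have e1 := h.e1 x hx
  have e2 := h.e2 x hx
  simp only [ka, hh]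
  linear_combination -p x * e1 - q x * e2

theorem Snap.nc_ka (h : Snap a b p q pt qt P Q Pt Qt PP QQ) (hb0 : 0 < b) (hb1 : b < 1)
    (ha : a ≠ 0) : Nc (ka p q) := by
  have := Nc.mulr (Bd.const a⁻¹) (((h.np.mul ((Nc.sum3 fun k => h.nPP k k).sub h.nqt).1).add
    (h.nq.mul ((Nc.sum3 fun k => h.nQQ k k).add h.npt).1)).sub (h.nc_hh hb0 hb1))
  convert this using 2 with x
  rw [← h.ka_eq, inv_mul_cancel_left₀ ha]

theorem Snap.ka_le (h : Snap a b p q pt qt P Q Pt Qt PP QQ) (hb0 : 0 < b) (hb1 : b < 1)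
    (ha : a ≠ 0) : ∃ C, ∀ x, |ka p q x| ≤ C * ‖x‖ := by
  obtain ⟨L, hL⟩ := h.lip
  obtain ⟨D, hD⟩ := h.hh_le hb0 hb1
  obtain ⟨-, C1, hC1⟩ := ((Nc.sum3 fun k => h.nPP k k).sub h.nqt).1
  obtain ⟨-, C2, hC2⟩ := ((Nc.sum3 fun k => h.nQQ k k).add h.npt).1
  refine ⟨|a⁻¹| * (L * C1 + L * C2 + D), fun x => ?_⟩
  have : ka p q x = a⁻¹ * (a * ka p q x) := by rw [inv_mul_cancel_left₀ ha]
  rw [this, h.ka_eq, abs_mul, mul_assoc]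
  gcongr
  refine (abs_sub _ _).trans ?_
  have h1 := abs_add_le (p x * (∑ k, PP k k x - qt x)) (q x * (∑ k, QQ k k x + pt x))
  rw [abs_mul, abs_mul] at h1
  have h2 := mul_le_mul (hL x).1 (hC1 x) (abs_nonneg _) ((abs_nonneg _).trans (hL x).1)
  have h3 := mul_le_mul (hL x).2 (hC2 x) (abs_nonneg _) ((abs_nonneg _).trans (hL x).2)
  have h4 := hD x
  linarith

theorem om_le_norm {R : ℝ} (hR : 0 < R) (k : Fin 3) (x : E3) : |om R k x| ≤ R⁻¹ * ‖x‖ := by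
  rw [om, abs_mul, mul_comm, abs_of_pos (sg_pos hR x)]
  exact mul_le_mul (sg_le hR x) (abs_coord_le k x) (abs_nonneg _) (by positivity)

theorem ld_om_mul {R : ℝ} (hR : 0 < R) (k : Fin 3) {c κ : E3 → ℝ} (hc : Bd c)
    (hκ : ∃ C, ∀ x, |κ x| ≤ C * ‖x‖) (v : E3) :
    HasLineDerivAt ℝ (fun x => c x * (om R k x * κ x)) 0 0 v := by
  obtain ⟨-, D, hD⟩ := hc
  obtain ⟨C, hC⟩ := hκ
  refine ld_zero_of_sq (C := D * (R⁻¹ * C)) (fun x => ?_) v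
  rw [abs_mul, abs_mul]
  have h1 := mul_le_mul (om_le_norm hR k x) (hC x) (abs_nonneg _)
    ((abs_nonneg _).trans (om_le_norm hR k x))
  have h2 := mul_le_mul (hD x) h1 (by positivity) ((abs_nonneg _).trans (hD x))
  refine h2.trans (le_of_eq ?_); ring

theorem Snap.ld_B (h : Snap a b p q pt qt P Q Pt Qt PP QQ) (hb0 : 0 < b) (hb1 : b < 1)
    {R : ℝ} (hR : 0 < R) (k : Fin 3) (x : E3) :
    HasLineDerivAt ℝ (fun x => om R k x * hh b p q x) (B' R b p q P Q k x) x (e3 k) := by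
  by_cases hx : x = 0
  · subst hx
    have := ld_om_mul hR k (Bd.const 1) (h.hh_le hb0 hb1) (e3 k)
    simp only [one_mul] at this
    refine ld_congr this ?_
    simp [B', hh, h.zero.1, h.zero.2]
  · refine ld_congr (ld_mul (ld_om hR k k x) (ld_mul (ld_gg b k hx)
      (ld_pow 2 (ld_add (ld_pow 2 (h.dp k x)) (ld_pow 2 (h.dq k x)))))) ?_
    simp [B', hh, om]; ring

theorem Snap.nc_B' (h : Snap a b p q pt qt P Q Pt Qt PP QQ) (hb0 : 0 < b) (hb1 : b < 1)
    {R : ℝ} (hR : 0 < R) (k : Fin 3) : Nc (B' R b p q P Q k) := by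
  have s := bd_sg hR
  have o := bd_om hR
  have so := s.sub (((o k).mul (o k)).mul s)
  have H := h.nc_hh hb0 hb1
  obtain ⟨g1, g2⟩ := h.gp hb0 hb1
  exact (Nc.mulr so H).add ((Nc.mulr ((Bd.const (-b)).mul (s.mul (bd_xxt k))) H).add
    (Nc.mulr (Bd.const 4) (Nc.mulr (o k) (((Nc.mulr g1 h.np).add (Nc.mulr g2 h.nq)).mul
      ((h.np.mul (h.nP k).1).add (h.nq.mul (h.nQ k).1)).1))))

theorem Snap.ld_S (h : Snap a b p q pt qt P Q Pt Qt PP QQ) (hb0 : 0 < b) (hb1 : b < 1)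
    (ha : a ≠ 0) (ε : ℝ) {R : ℝ} (hR : 0 < R) (k : Fin 3) (x : E3) :
    HasLineDerivAt ℝ (S R a ε p q k) (S' R a ε p q P Q k x) x (e3 k) := by
  by_cases hx : x = 0
  · subst hx
    have := ld_om_mul hR k ((Bd.const (2 * a)).sub ((Bd.const (2 * ε * R^2)).mul
      ((bd_sg hR).pow 2))) (h.ka_le hb0 hb1 ha) (e3 k)
    refine ld_congr this ?_
    simp [S', ka, h.zero.1, h.zero.2]
  · have hc : HasLineDerivAt ℝ (fun _ : E3 => 2 * a) 0 x (e3 k) := hasDerivAt_const _ _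
    refine ld_congr (ld_mul (ld_sub hc (ld_smul (2 * ε * R^2) (ld_pow 2 (ld_sg hR k x))))
      (ld_mul (ld_om hR k k x) (ld_mul (ld_add (ld_pow 2 (h.dp k x)) (ld_pow 2 (h.dq k x)))
      (ld_ta k hx)))) ?_
    simp [S', ka, om]; ring

theorem Snap.nc_S (h : Snap a b p q pt qt P Q Pt Qt PP QQ) (hb0 : 0 < b) (hb1 : b < 1)
    (ha : a ≠ 0) (ε : ℝ) {R : ℝ} (hR : 0 < R) (k : Fin 3) : Nc (S R a ε p q k) :=
  Nc.mulr ((Bd.const (2 * a)).sub ((Bd.const (2 * ε * R^2)).mul ((bd_sg hR).pow 2)))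
    (Nc.mulr (bd_om hR k) (h.nc_ka hb0 hb1 ha))

theorem Snap.nc_S' (h : Snap a b p q pt qt P Q Pt Qt PP QQ) (hb0 : 0 < b) (hb1 : b < 1)
    (ha : a ≠ 0) (ε : ℝ) {R : ℝ} (hR : 0 < R) (k : Fin 3) : Nc (S' R a ε p q P Q k) := by
  have s := bd_sg hR
  have o := bd_om hR
  have so := s.sub (((o k).mul (o k)).mul s)
  have K := h.nc_ka hb0 hb1 ha
  obtain ⟨L, hL⟩ := h.lip
  have t1 := bd_xtp k h.np.1.1 fun x => (hL x).1
  have t2 := bd_xtp k h.nq.1.1 fun x => (hL x).2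
  have c := ((Bd.const (2 * a)).sub ((Bd.const (2 * ε * R^2)).mul (s.pow 2)))
  exact (Nc.mulr (((Bd.const (4 * ε * R^2)).mul (((o k).mul (o k)).mul (s.pow 3))).add
    (c.mul so)) K).add (Nc.mulr c ((Nc.mulr ((Bd.const 2).mul s)
      ((Nc.mulr t1 (h.nP k)).add (Nc.mulr t2 (h.nQ k)))).sub
      (Nc.mulr ((Bd.const 2).mul (s.mul (bd_xxt k))) K)))

end

def MT (R : ℝ) (p q pt qt : E3 → ℝ) (P Q Pt Qt : Fin 3 → E3 → ℝ) (x : E3) : ℝ :=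
  ∑ j, 2 * (om R j x * (pt x * Q j x + p x * Qt j x - (qt x * P j x + q x * Pt j x)))

section
variable {a b : ℝ} {p q pt qt : E3 → ℝ} {P Q Pt Qt : Fin 3 → E3 → ℝ}
    {PP QQ : Fin 3 → Fin 3 → E3 → ℝ}

theorem Snap.nc_MT (h : Snap a b p q pt qt P Q Pt Qt PP QQ) {R : ℝ} (hR : 0 < R) :
    Nc (MT R p q pt qt P Q Pt Qt) :=
  Nc.sum3 fun j => Nc.mulr (Bd.const 2) (Nc.mulr (bd_om hR j)
    (((h.npt.mul (h.nQ j).1).add (h.np.mul (h.nQt j).1)).sub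
      ((h.nqt.mul (h.nP j).1).add (h.nq.mul (h.nPt j).1))))

theorem Snap.identity (h : Snap a b p q pt qt P Q Pt Qt PP QQ) (ε : ℝ) {R : ℝ} (hR : 0 < R)
    {x : E3} (hx : x ≠ 0) :
    MT R p q pt qt P Q Pt Qt x - ∑ k, A0' R p q pt qt P Q Pt Qt k x - ∑ k, AF' R p P PP k x
      - ∑ k, AF' R q Q QQ k x - ∑ k, B' R b p q P Q k x - ∑ k, S' R a ε p q P Q k x
    = 4 * sg R x * (∑ j, P j x ^ 2 - (∑ j, om R j x * P j x) ^ 2)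
      + 4 * sg R x * (∑ j, Q j x ^ 2 - (∑ j, om R j x * Q j x) ^ 2)
      + 15 * R ^ 4 * sg R x ^ 7 * (p x ^ 2 + q x ^ 2) + 4 * a * sg R x * ka p q x
      + (2 * sg R x + R ^ 2 * sg R x ^ 3) * hh b p q x + b * sg R x * hh b p q x
      + ε * ((6 * R ^ 4 * sg R x ^ 5 - 4 * R ^ 2 * sg R x ^ 3) * ka p q x
        + 4 * R ^ 2 * sg R x ^ 3 * ta x * (p x * (∑ j, x j * P j x) + q x * (∑ j, x j * Q j x))) := by
  have e1 := h.e1 x hx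
  have e2 := h.e2 x hx
  have hs := om_sum hR x
  have ht := ta_mul hx
  have hA0 : MT R p q pt qt P Q Pt Qt x - ∑ k, A0' R p q pt qt P Q Pt Qt k x =
      4 * (pt x * (∑ j, om R j x * Q j x) - qt x * (∑ j, om R j x * P j x))
      - 2 * (2 * sg R x + R ^ 2 * sg R x ^ 3) * (p x * qt x - q x * pt x) := by
    simp only [MT, A0', Fin.sum_univ_three]
    linear_combination (2 * sg R x * (p x * qt x - q x * pt x)) * hs
  have hB : ∑ k, B' R b p q P Q k x = (2 * sg R x + R ^ 2 * sg R x ^ 3) * hh b p q x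
      - b * sg R x * hh b p q x + 4 * gg b x * (p x ^ 2 + q x ^ 2)
        * (p x * (∑ j, om R j x * P j x) + q x * (∑ j, om R j x * Q j x)) := by
    simp only [B', Fin.sum_univ_three]
    linear_combination (-sg R x * hh b p q x) * hs - b * sg R x * hh b p q x * ht
  have hS : ∑ k, S' R a ε p q P Q k x =
      (4 * ε * R ^ 2 * (1 - R ^ 2 * sg R x ^ 2) * sg R x ^ 3
       + (2 * a - 2 * ε * R ^ 2 * sg R x ^ 2) * (R ^ 2 * sg R x ^ 3)) * ka p q x
      + (2 * a - 2 * ε * R ^ 2 * sg R x ^ 2) * (2 * sg R x * ta x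
          * (p x * (∑ j, x j * P j x) + q x * (∑ j, x j * Q j x))) := by
    simp only [S', Fin.sum_univ_three]
    linear_combination (4 * ε * R ^ 2 * sg R x ^ 3
      - (2 * a - 2 * ε * R ^ 2 * sg R x ^ 2) * sg R x) * ka p q x * hs
      - 2 * (2 * a - 2 * ε * R ^ 2 * sg R x ^ 2) * sg R x * ka p q x * ht
  have oP : ∑ j, om R j x * P j x = sg R x * ∑ j, x j * P j x := by
    simp only [om, Fin.sum_univ_three]; ring
  have oQ : ∑ j, om R j x * Q j x = sg R x * ∑ j, x j * Q j x := by
    simp only [om, Fin.sum_univ_three]; ring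
  rw [hA0, sum_AF' hR h.sP, sum_AF' hR h.sQ, hB, hS, oP, oQ]
  generalize ∑ j, x j * P j x = XP at *
  generalize ∑ j, x j * Q j x = XQ at *
  generalize ∑ k, PP k k x = LP at *
  generalize ∑ k, QQ k k x = LQ at *
  simp only [ka, hh]
  linear_combination (4 * (sg R x * XP) + 2 * (2 * sg R x + R ^ 2 * sg R x ^ 3) * p x) * e1
    + (4 * (sg R x * XQ) + 2 * (2 * sg R x + R ^ 2 * sg R x ^ 3) * q x) * e2

theorem cs3 (o0 o1 o2 f0 f1 f2 w : ℝ) (h : o0 ^ 2 + o1 ^ 2 + o2 ^ 2 = 1 - w) :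
    w * (f0 ^ 2 + f1 ^ 2 + f2 ^ 2) ≤ f0 ^ 2 + f1 ^ 2 + f2 ^ 2
      - (o0 * f0 + o1 * f1 + o2 * f2) ^ 2 := by
  have : w = 1 - (o0 ^ 2 + o1 ^ 2 + o2 ^ 2) := by linarith
  subst this
  nlinarith [sq_nonneg (o0 * f1 - o1 * f0), sq_nonneg (o0 * f2 - o2 * f0),
    sq_nonneg (o1 * f2 - o2 * f1)]

theorem hardy3 (x0 x1 x2 f0 f1 f2 t f : ℝ) (h : t * (x0 ^ 2 + x1 ^ 2 + x2 ^ 2) = 1) :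
    0 ≤ 4 * (f0 ^ 2 + f1 ^ 2 + f2 ^ 2) + 4 * t * (f * (x0 * f0 + x1 * f1 + x2 * f2))
      + f ^ 2 * t := by
  have : 4 * (f0 ^ 2 + f1 ^ 2 + f2 ^ 2) + 4 * t * (f * (x0 * f0 + x1 * f1 + x2 * f2))
      + f ^ 2 * t = (2 * f0 + x0 * t * f) ^ 2 + (2 * f1 + x1 * t * f) ^ 2
        + (2 * f2 + x2 * t * f) ^ 2 := by
    linear_combination (- f ^ 2 * t) * h
  rw [this]; positivity

def eps (a : ℝ) : ℝ := if a < 0 then 1 else 0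

theorem Snap.ineq (h : Snap a b p q pt qt P Q Pt Qt PP QQ) (hb0 : 0 < b) (ha : -(1/4) < a)
    {R : ℝ} (hR : 0 < R) {x : E3} (hx : x ≠ 0) :
    2 * sg R x * hh b p q x - 7 * (R⁻¹) ^ 3 * (p x ^ 2 + q x ^ 2) ≤
    MT R p q pt qt P Q Pt Qt x - ∑ k, A0' R p q pt qt P Q Pt Qt k x - ∑ k, AF' R p P PP k x
      - ∑ k, AF' R q Q QQ k x - ∑ k, B' R b p q P Q k x - ∑ k, S' R a (eps a) p q P Q k x := by
  rw [h.identity (eps a) hR hx]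
  have hs := om_sum hR x
  have ht := ta_mul hx
  have hs2 := sg_sq hR x
  rw [nsq] at hs2
  have s0 := sg_pos hR x
  have sl := sg_le hR x
  have t0 := ta_nonneg x
  have hh0 : 0 ≤ hh b p q x := mul_nonneg (gg_nonneg b x) (sq_nonneg _)
  have k0 : 0 ≤ ka p q x := mul_nonneg (by positivity) t0
  have cP := cs3 _ _ _ (P 0 x) (P 1 x) (P 2 x) _ hs
  have cQ := cs3 _ _ _ (Q 0 x) (Q 1 x) (Q 2 x) _ hs
  have hP := hardy3 _ _ _ (P 0 x) (P 1 x) (P 2 x) _ (p x) ht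
  have hQ := hardy3 _ _ _ (Q 0 x) (Q 1 x) (Q 2 x) _ (q x) ht
  have ks : ka p q x * (1 - R ^ 2 * sg R x ^ 2) = sg R x ^ 2 * (p x ^ 2 + q x ^ 2) := by
    simp only [ka]
    linear_combination (- (p x ^ 2 + q x ^ 2) * ta x) * hs2
      + (p x ^ 2 + q x ^ 2) * sg R x ^ 2 * ht
  simp only [Fin.sum_univ_three]
  have n0 : 0 ≤ p x ^ 2 + q x ^ 2 := by positivity
  have hka : ka p q x = (p x ^ 2 + q x ^ 2) * ta x := rfl
  set n := p x ^ 2 + q x ^ 2 with hn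
  set s := sg R x
  set H := hh b p q x
  set K := ka p q x
  set VP := P 0 x ^ 2 + P 1 x ^ 2 + P 2 x ^ 2
  set VQ := Q 0 x ^ 2 + Q 1 x ^ 2 + Q 2 x ^ 2
  set DP := VP - (om R 0 x * P 0 x + om R 1 x * P 1 x + om R 2 x * P 2 x) ^ 2
  set DQ := VQ - (om R 0 x * Q 0 x + om R 1 x * Q 1 x + om R 2 x * Q 2 x) ^ 2
  have VP0 : 0 ≤ VP := by positivity
  have VQ0 : 0 ≤ VQ := by positivity
  have w0 : 0 ≤ R ^ 2 * s ^ 2 := by positivity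
  have f1 : 0 ≤ 15 * R ^ 4 * s ^ 7 * n := by positivity
  have f2 : 0 ≤ R ^ 2 * s ^ 3 * H := by positivity
  have f3 : 0 ≤ b * s * H := by positivity
  have s3 : s ^ 3 * n ≤ (R⁻¹) ^ 3 * n := by gcongr
  have f4 : 0 ≤ (R⁻¹) ^ 3 * n := by positivity
  have gP : 4 * s * (R ^ 2 * s ^ 2 * VP) ≤ 4 * s * DP := by gcongr
  have gQ : 4 * s * (R ^ 2 * s ^ 2 * VQ) ≤ 4 * s * DQ := by gcongr
  unfold eps
  split_ifs with h0
  · have a1 : 0 ≤ (4 * a + 1) * (s * K) := mul_nonneg (by linarith) (by positivity)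
    have b1 := mul_nonneg (show 0 ≤ R ^ 2 * s ^ 3 by positivity) hP
    have b2 := mul_nonneg (show 0 ≤ R ^ 2 * s ^ 3 by positivity) hQ
    have c1 : R ^ 2 * s ^ 2 * (s ^ 3 * n) ≤ 1 * (s ^ 3 * n) := by
      gcongr
      have : R * s ≤ 1 := by
        calc R * s ≤ R * R⁻¹ := by gcongr
          _ = 1 := mul_inv_cancel₀ hR.ne'
      calc R ^ 2 * s ^ 2 = (R * s) ^ 2 := by ring
        _ ≤ 1 := pow_le_one₀ (by positivity) this
    have key : 4 * s * (R ^ 2 * s ^ 2 * VP) + 4 * s * (R ^ 2 * s ^ 2 * VQ) + 4 * a * s * K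
        + ((6 * R ^ 4 * s ^ 5 - 4 * R ^ 2 * s ^ 3) * K
        + 4 * R ^ 2 * s ^ 3 * ta x * (p x * (x 0 * P 0 x + x 1 * P 1 x + x 2 * P 2 x)
          + q x * (x 0 * Q 0 x + x 1 * Q 1 x + x 2 * Q 2 x)))
        = (4 * a + 1) * (s * K)
        + R ^ 2 * s ^ 3 * (4 * VP + 4 * ta x * (p x * (x 0 * P 0 x + x 1 * P 1 x + x 2 * P 2 x))
          + p x ^ 2 * ta x)
        + R ^ 2 * s ^ 3 * (4 * VQ + 4 * ta x * (q x * (x 0 * Q 0 x + x 1 * Q 1 x + x 2 * Q 2 x))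
          + q x ^ 2 * ta x)
        - s ^ 3 * n - 6 * (R ^ 2 * s ^ 2 * (s ^ 3 * n)) := by
      have hka' : K = (p x ^ 2 + q x ^ 2) * ta x := hka
      linear_combination (-6 * R ^ 2 * s ^ 3 - s) * ks + (R ^ 2 * s ^ 3) * hka'
    linarith
  · push Not at h0
    have a1 : 0 ≤ 4 * a * s * K := by positivity
    have b1 : 0 ≤ 4 * s * (R ^ 2 * s ^ 2 * VP) := by positivity
    have b2 : 0 ≤ 4 * s * (R ^ 2 * s ^ 2 * VQ) := by positivity
    linarith

theorem Snap.int_S' (h : Snap a b p q pt qt P Q Pt Qt PP QQ) (hb0 : 0 < b) (hb1 : b < 1)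
    {R : ℝ} (hR : 0 < R) (k : Fin 3) :
    Nc (S' R a (eps a) p q P Q k) ∧ ∫ x, S' R a (eps a) p q P Q k x = 0 := by
  by_cases ha : a = 0
  · have : S' R a (eps a) p q P Q k = fun _ => 0 := by
      funext x; simp [S', eps, ha]
    rw [this]; exact ⟨Nc.zero, by simp⟩
  · have := h.nc_S' hb0 hb1 ha (eps a) hR k
    exact ⟨this, int_ld_zero k (h.nc_S hb0 hb1 ha (eps a) hR k) this
      (h.ld_S hb0 hb1 ha (eps a) hR k)⟩

theorem int_sum3 {f : Fin 3 → E3 → ℝ} (hf : ∀ j, Nc (f j)) (h0 : ∀ j, ∫ x, f j x = 0) :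
    ∫ x, ∑ j, f j x = 0 := by
  rw [integral_finsetSum _ fun j _ => (hf j).2]
  simp [h0]

theorem Snap.core (h : Snap a b p q pt qt P Q Pt Qt PP QQ) (hb0 : 0 < b) (hb1 : b < 1)
    (ha : -(1/4) < a) {R : ℝ} (hR : 0 < R) :
    R⁻¹ * ∫ x in Metric.closedBall (0 : E3) (R / 4), hh b p q x
      ≤ (∫ x, MT R p q pt qt P Q Pt Qt x) + 7 * (R⁻¹) ^ 3 * ∫ x, (p x ^ 2 + q x ^ 2) := by
  have nA := nc_A0' hR h.np h.nq h.npt h.nqt h.nP h.nQ h.nPt h.nQt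
  have iA : ∀ k, ∫ x, A0' R p q pt qt P Q Pt Qt k x = 0 := fun k =>
    int_ld_zero k (nc_A0 hR h.np h.nq h.npt h.nqt k) (nA k) (ld_A0 hR h.dp h.dq h.dpt h.dqt k)
  have nFp := nc_AF' hR h.np h.nP h.nPP
  have iFp : ∀ k, ∫ x, AF' R p P PP k x = 0 := fun k =>
    int_ld_zero k (nc_AF hR h.np h.nP k) (nFp k) (ld_AF hR h.dp h.dP k)
  have nFq := nc_AF' hR h.nq h.nQ h.nQQ
  have iFq : ∀ k, ∫ x, AF' R q Q QQ k x = 0 := fun k =>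
    int_ld_zero k (nc_AF hR h.nq h.nQ k) (nFq k) (ld_AF hR h.dq h.dQ k)
  have nH := h.nc_hh hb0 hb1
  have nB := h.nc_B' hb0 hb1 hR
  have iB : ∀ k, ∫ x, B' R b p q P Q k x = 0 := fun k =>
    int_ld_zero k (Nc.mulr (bd_om hR k) nH) (nB k) (h.ld_B hb0 hb1 hR k)
  have nS := fun k => (h.int_S' hb0 hb1 hR k).1
  have iS := fun k => (h.int_S' hb0 hb1 hR k).2
  have nM := h.nc_MT hR
  have sA := Nc.sum3 nA
  have sFp := Nc.sum3 nFp
  have sFq := Nc.sum3 nFq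
  have sB := Nc.sum3 nB
  have sS := Nc.sum3 nS
  have nn : Nc (fun x => p x ^ 2 + q x ^ 2) := (h.np.pow 1).add (h.nq.pow 1)
  have e : ∫ x, (MT R p q pt qt P Q Pt Qt x - ∑ k, A0' R p q pt qt P Q Pt Qt k x
      - ∑ k, AF' R p P PP k x
      - ∑ k, AF' R q Q QQ k x - ∑ k, B' R b p q P Q k x - ∑ k, S' R a (eps a) p q P Q k x)
      = ∫ x, MT R p q pt qt P Q Pt Qt x := by
    rw [integral_sub ((((nM.sub sA).sub sFp).sub sFq).sub sB).2 sS.2,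
      integral_sub (((nM.sub sA).sub sFp).sub sFq).2 sB.2,
      integral_sub ((nM.sub sA).sub sFp).2 sFq.2, integral_sub (nM.sub sA).2 sFp.2,
      integral_sub nM.2 sA.2, int_sum3 nA iA, int_sum3 nFp iFp, int_sum3 nFq iFq,
      int_sum3 nB iB, int_sum3 nS iS]
    ring
  have hmeas : MeasurableSet (Metric.closedBall (0 : E3) (R / 4)) := Metric.isClosed_closedBall.measurableSet
  have l : ∫ x, ((Metric.closedBall (0 : E3) (R / 4)).indicator (fun x => R⁻¹ * hh b p q x) x
      - 7 * (R⁻¹) ^ 3 * (p x ^ 2 + q x ^ 2)) ≤ ∫ x, MT R p q pt qt P Q Pt Qt x := by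
    rw [← e]
    apply integral_mono_ae
    · exact (((nH.2.const_mul _).indicator hmeas)).sub (nn.2.const_mul _)
    · exact (((((nM.sub sA).sub sFp).sub sFq).sub sB).sub sS).2
    · have : ∀ᵐ x : E3, x ≠ 0 := by
        simp [ae_iff]
      filter_upwards [this] with x hx
      refine le_trans ?_ (h.ineq hb0 ha hR hx)
      have hh0 : 0 ≤ hh b p q x := mul_nonneg (gg_nonneg b x) (sq_nonneg _)
      have s0 := sg_pos hR x
      apply sub_le_sub_right
      by_cases hm : x ∈ Metric.closedBall (0 : E3) (R / 4)
      · rw [Set.indicator_of_mem hm]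
        gcongr
        have hm' : ‖x‖ ≤ R / 4 := by simpa using hm
        have s2 := sg_sq hR x
        have hx2 : ‖x‖ ^ 2 ≤ (R / 4) ^ 2 := by gcongr
        rw [inv_le_iff_one_le_mul₀ hR]
        have : 0 < 2 * sg R x * R := by positivity
        nlinarith [sq_nonneg (sg R x)]
      · rw [Set.indicator_of_notMem hm]; positivity
  rw [integral_sub ((nH.2.const_mul _).indicator hmeas) (nn.2.const_mul _),
    integral_indicator hmeas, integral_const_mul, integral_const_mul] at l
  linarith
end

open LineDeriv in
theorem pd_schwartz (f : SchwartzMap E3 ℂ) (j : Fin 3) :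
    ∃ g : SchwartzMap E3 ℂ, ∀ x, g x = pd j f x :=
  ⟨∂_{e3 j} f, fun x => by rw [SchwartzMap.lineDerivOp_apply_eq_fderiv]; rfl⟩

theorem schwartz_bdd (f : SchwartzMap E3 ℂ) : ∃ C, ∀ x, ‖f x‖ ≤ C := by
  obtain ⟨C, hC⟩ := f.decay 0 0
  exact ⟨C, fun x => by simpa using hC.2 x⟩

theorem nc_re (f : SchwartzMap E3 ℂ) : Nc (fun x => (f x).re) := by
  obtain ⟨C, hC⟩ := schwartz_bdd f
  exact ⟨⟨Complex.measurable_re.comp f.continuous.measurable, C,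
    fun x => (Complex.abs_re_le_norm _).trans (hC x)⟩, f.integrable.re⟩

theorem nc_im (f : SchwartzMap E3 ℂ) : Nc (fun x => (f x).im) := by
  obtain ⟨C, hC⟩ := schwartz_bdd f
  exact ⟨⟨Complex.measurable_im.comp f.continuous.measurable, C,
    fun x => (Complex.abs_im_le_norm _).trans (hC x)⟩, f.integrable.im⟩

theorem ld_re (f : SchwartzMap E3 ℂ) (k : Fin 3) (x : E3) :
    HasLineDerivAt ℝ (fun x => (f x).re) (pd k f x).re x (e3 k) := by
  have := (Complex.reCLM.hasFDerivAt.comp x (f.differentiableAt (x := x)).hasFDerivAt).hasLineDerivAt (e3 k)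
  exact this

theorem ld_im (f : SchwartzMap E3 ℂ) (k : Fin 3) (x : E3) :
    HasLineDerivAt ℝ (fun x => (f x).im) (pd k f x).im x (e3 k) := by
  have := (Complex.imCLM.hasFDerivAt.comp x (f.differentiableAt (x := x)).hasFDerivAt).hasLineDerivAt (e3 k)
  exact this

theorem pd_symm (f : SchwartzMap E3 ℂ) (j k : Fin 3) (x : E3) :
    pd k (pd j f) x = pd j (pd k f) x := by
  have hc : ContDiff ℝ 2 f := f.smooth 2
  have hs : IsSymmSndFDerivAt ℝ f x := hc.contDiffAt.isSymmSndFDerivAt (by simp)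
  have hd : DifferentiableAt ℝ (fderiv ℝ f) x :=
    (hc.fderiv_right (m := 1) (by norm_num)).differentiable (by norm_num) x
  have : ∀ j k, pd k (pd j f) x = fderiv ℝ (fderiv ℝ f) x (e3 k) (e3 j) := by
    intro j k
    have := hd.hasFDerivAt.clm_apply (hasFDerivAt_const (e3 j) x)
    have h2 : HasFDerivAt (pd j f) _ x := this
    unfold pd at h2 ⊢
    rw [h2.fderiv]; simp
  rw [this, this, hs]

theorem lip_zero (f : SchwartzMap E3 ℂ) (h0 : f 0 = 0) : ∃ L, ∀ x, ‖f x‖ ≤ L * ‖x‖ := by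
  obtain ⟨C, hC⟩ := f.decay 0 1
  refine ⟨C, fun x => ?_⟩
  have := Convex.norm_image_sub_le_of_norm_fderiv_le (𝕜 := ℝ) (f := f) (s := Set.univ) (C := C)
    (fun x _ => f.differentiableAt) (fun x _ => by
      have := hC.2 x
      rwa [pow_zero, one_mul, norm_iteratedFDeriv_one] at this) convex_univ
      (Set.mem_univ 0) (Set.mem_univ x)
  simpa [h0] using this

theorem sol_zero {a b : ℝ} (hb0 : 0 < b) (hb1 : b < 1) (f d : E3 → ℂ) (l : E3 → ℂ)
    (hf : Continuous f) (hd : Continuous d) (hl : Continuous l)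
    (he : ∀ x : E3, x ≠ 0 → Complex.I * d x + l x - ((a / ‖x‖ ^ 2 : ℝ) : ℂ) * f x
        = ((1 : ℝ) : ℂ) * ((‖x‖ ^ (-b) : ℝ) : ℂ) * ((‖f x‖ ^ 2 : ℝ) : ℂ) * f x) : f 0 = 0 := by
  have hn : NeBot (𝓝[≠] (0 : E3)) := inferInstance
  by_cases ha : a = 0
  · have c1 : Continuous fun x : E3 => ((‖x‖ ^ b : ℝ) : ℂ) * (Complex.I * d x + l x) := by
      have : Continuous fun x : E3 => ‖x‖ ^ b := continuous_norm.rpow_const fun x => Or.inr hb0.le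
      fun_prop
    have c2 : Continuous fun x : E3 => ((‖f x‖ ^ 2 : ℝ) : ℂ) * f x := by fun_prop
    have l1 := (c1.tendsto 0).mono_left (nhdsWithin_le_nhds (s := {0}ᶜ))
    have l2 := (c2.tendsto 0).mono_left (nhdsWithin_le_nhds (s := {0}ᶜ))
    have := tendsto_nhds_unique_of_eventuallyEq l1 l2 (by
      filter_upwards [self_mem_nhdsWithin] with x hx
      have hx : x ≠ 0 := hx
      have h0 : 0 < ‖x‖ := norm_pos_iff.mpr hx
      have e := he x hx
      simp only [ha, zero_div, Complex.ofReal_zero, zero_mul, sub_zero] at e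
      rw [e]
      have : ((‖x‖ ^ b : ℝ) : ℂ) * ((‖x‖ ^ (-b) : ℝ) : ℂ) = 1 := by
        rw [← Complex.ofReal_mul, ← Real.rpow_add h0]; simp
      push_cast at this ⊢
      linear_combination (‖f x‖ ^ 2 * f x : ℂ) * this)
    simp [Real.zero_rpow hb0.ne'] at this
    exact this
  · have c1 : Continuous fun x : E3 => ((‖x‖ ^ 2 : ℝ) : ℂ) * (Complex.I * d x + l x)
        - ((‖x‖ ^ (2 - b) : ℝ) : ℂ) * ((‖f x‖ ^ 2 : ℝ) : ℂ) * f x := by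
      have : Continuous fun x : E3 => ‖x‖ ^ (2 - b) :=
        continuous_norm.rpow_const fun x => Or.inr (by linarith)
      fun_prop
    have c2 : Continuous fun x : E3 => (a : ℂ) * f x := by fun_prop
    have l1 := (c1.tendsto 0).mono_left (nhdsWithin_le_nhds (s := {0}ᶜ))
    have l2 := (c2.tendsto 0).mono_left (nhdsWithin_le_nhds (s := {0}ᶜ))
    have := tendsto_nhds_unique_of_eventuallyEq l1 l2 (by
      filter_upwards [self_mem_nhdsWithin] with x hx
      have hx : x ≠ 0 := hx
      have h0 : 0 < ‖x‖ := norm_pos_iff.mpr hx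
      have e := he x hx
      have h1 : ((‖x‖ ^ (2 - b) : ℝ) : ℂ) = ((‖x‖ ^ 2 : ℝ) : ℂ) * ((‖x‖ ^ (-b) : ℝ) : ℂ) := by
        rw [← Complex.ofReal_mul, sub_eq_add_neg, Real.rpow_add h0]; simp
      have h2 : ((‖x‖ ^ 2 : ℝ) : ℂ) * ((a / ‖x‖ ^ 2 : ℝ) : ℂ) = (a : ℂ) := by
        rw [← Complex.ofReal_mul]; congr 1; field_simp
      rw [h1]
      linear_combination ((‖x‖ ^ 2 : ℝ) : ℂ) * e + f x * h2
        + ((‖x‖ ^ 2 : ℝ) : ℂ) * ((‖x‖ ^ (-b) : ℝ) : ℂ) * ((‖f x‖ ^ 2 : ℝ) : ℂ) * f x * (Complex.ofReal_one))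
    have h2 : (2 - b) ≠ 0 := by linarith
    simp [Real.zero_rpow h2, ha] at this
    exact this

def ut (u : ℝ → E3 → ℂ) (t : ℝ) (x : E3) : ℂ := deriv (fun s => u s x) t

theorem snap_of_sol {a b : ℝ} (hb0 : 0 < b) (hb1 : b < 1) {u : ℝ → E3 → ℂ}
    (h : IsSchwartzSolution a b 1 u) (t : ℝ) :
    Snap a b (fun x => (u t x).re) (fun x => (u t x).im) (fun x => (ut u t x).re)
      (fun x => (ut u t x).im) (fun j x => (pd j (u t) x).re) (fun j x => (pd j (u t) x).im)
      (fun j x => (pd j (ut u t) x).re) (fun j x => (pd j (ut u t) x).im)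
      (fun j k x => (pd k (pd j (u t)) x).re) (fun j k x => (pd k (pd j (u t)) x).im) := by
  obtain ⟨f, hf⟩ := h.schwartz t
  obtain ⟨d, hd⟩ := h.schwartz_dt t
  have hf : u t = f := funext fun x => (hf x).symm
  have hd : ut u t = d := funext fun x => (hd x).symm
  choose F hF using pd_schwartz f
  choose D hD using pd_schwartz d
  have hF : ∀ j, pd j f = F j := fun j => funext fun x => (hF j x).symm
  have hD : ∀ j, pd j d = D j := fun j => funext fun x => (hD j x).symm
  choose FF hFF using fun j => pd_schwartz (F j)
  have hFF : ∀ j k, pd k (F j) = FF j k := fun j k => funext fun x => (hFF j k x).symm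
  have hsym : ∀ j k x, FF j k x = FF k j x := by
    intro j k x
    rw [← hFF, ← hFF, ← hF, ← hF, pd_symm]
  have he : ∀ x : E3, x ≠ 0 → Complex.I * d x + (∑ j, FF j j x) - ((a / ‖x‖ ^ 2 : ℝ) : ℂ) * f x
        = ((1 : ℝ) : ℂ) * ((‖x‖ ^ (-b) : ℝ) : ℂ) * ((‖f x‖ ^ 2 : ℝ) : ℂ) * f x := by
    intro x hx
    have e := h.eqn t x hx
    have e1 : deriv (fun s => u s x) t = d x := congrFun hd x
    rw [e1, hf] at e
    rw [← e]
    have : lap f x = ∑ j, FF j j x := by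
      unfold lap
      refine Finset.sum_congr rfl fun j _ => ?_
      have : (fun y => pd j f y) = F j := hF j
      rw [this, hFF]
    rw [this]
  have hz : f 0 = 0 := sol_zero hb0 hb1 f d (fun x => ∑ j, FF j j x) f.continuous d.continuous
    (continuous_finsetSum _ fun j _ => (FF j j).continuous) he
  rw [hf, hd]
  simp only [hF, hD, hFF]
  refine { np := nc_re f, nq := nc_im f, npt := nc_re d, nqt := nc_im d, nP := fun j => nc_re _, nQ := fun j => nc_im _, nPt := fun j => nc_re _, nQt := fun j => nc_im _, nPP := fun j k => nc_re _, nQQ := fun j k => nc_im _, dp := ?_, dq := ?_, dpt := ?_, dqt := ?_, dP := ?_, dQ := ?_, sP := fun j k x => by simp only [hsym], sQ := fun j k x => by simp only [hsym], lip := ?_, e1 := ?_, e2 := ?_ }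
  · intro k x; rw [← hF]; exact ld_re f k x
  · intro k x; rw [← hF]; exact ld_im f k x
  · intro k x; rw [← hD]; exact ld_re d k x
  · intro k x; rw [← hD]; exact ld_im d k x
  · intro j k x; rw [← hFF]; exact ld_re (F j) k x
  · intro j k x; rw [← hFF]; exact ld_im (F j) k x
  · obtain ⟨L, hL⟩ := lip_zero f hz
    exact ⟨L, fun x => ⟨(Complex.abs_re_le_norm _).trans (hL x),
      (Complex.abs_im_le_norm _).trans (hL x)⟩⟩
  · intro x hx
    have e := congrArg Complex.re (he x hx)
    rw [Complex.sq_norm, Complex.normSq_apply] at e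
    simp only [Complex.add_re, Complex.sub_re, Complex.mul_re, Complex.I_re, Complex.I_im,
      Complex.ofReal_re, Complex.ofReal_im, Complex.re_sum, Complex.mul_im] at e
    simp only [gg, ta]
    rw [div_eq_mul_inv] at e
    linear_combination e
  · intro x hx
    have e := congrArg Complex.im (he x hx)
    rw [Complex.sq_norm, Complex.normSq_apply] at e
    simp only [Complex.add_im, Complex.sub_im, Complex.mul_im, Complex.I_re, Complex.I_im,
      Complex.ofReal_re, Complex.ofReal_im, Complex.im_sum, Complex.mul_re] at e
    simp only [gg, ta]
    rw [div_eq_mul_inv] at e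
    linear_combination e

theorem cv1 (t : ℝ) (x : E3) : HasDerivAt (fun s : ℝ => (s, x)) ((1 : ℝ), (0 : E3)) t :=
  (hasDerivAt_id t).prodMk (hasDerivAt_const t x)

theorem cv2 (t : ℝ) (x : E3) :
    HasFDerivAt (fun y : E3 => (t, y)) (ContinuousLinearMap.inr ℝ ℝ E3) x :=
  hasFDerivAt_prodMk_right t x

theorem curve_t {F : Type*} [NormedAddCommGroup F] [NormedSpace ℝ F] {V : ℝ × E3 → F}
    (hV : Differentiable ℝ V) (t : ℝ) (x : E3) :
    HasDerivAt (fun s => V (s, x)) (fderiv ℝ V (t, x) (1, 0)) t := by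
  have h : HasFDerivAt V (fderiv ℝ V (t, x)) (t, x) := (hV (t, x)).hasFDerivAt
  exact HasFDerivAt.comp_hasDerivAt (f := fun s : ℝ => (s, x)) t h (cv1 t x)

theorem curve_x {F : Type*} [NormedAddCommGroup F] [NormedSpace ℝ F] {V : ℝ × E3 → F}
    (hV : Differentiable ℝ V) (t : ℝ) (x : E3) :
    HasFDerivAt (fun y => V (t, y)) ((fderiv ℝ V (t, x)).comp (ContinuousLinearMap.inr ℝ ℝ E3)) x := by
  have h : HasFDerivAt V (fderiv ℝ V (t, x)) (t, x) := (hV (t, x)).hasFDerivAt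
  exact HasFDerivAt.comp (f := fun y : E3 => (t, y)) x h (cv2 t x)

theorem mixed {u : ℝ → E3 → ℂ} (hu : ContDiff ℝ (⊤ : ℕ∞) (Function.uncurry u)) (j : Fin 3)
    (t : ℝ) (x : E3) :
    HasDerivAt (fun s => u s x) (ut u t x) t ∧
    HasDerivAt (fun s => pd j (u s) x) (pd j (ut u t) x) t := by
  obtain ⟨U, hU⟩ : ∃ U : ℝ × E3 → ℂ, U = Function.uncurry u := ⟨_, rfl⟩
  have hv : ∀ s y, u s y = U (s, y) := fun s y => by rw [hU]; rfl
  rw [← hU] at hu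
  have hu2 : ContDiff ℝ 2 U := contDiff_infty.mp hu 2
  clear hU hu
  have hdU : Differentiable ℝ U := hu2.differentiable (by norm_num)
  have hd2 : Differentiable ℝ (fderiv ℝ U) :=
    (hu2.fderiv_right (m := 1) (by norm_num)).differentiable (by norm_num)
  have hs : ∀ z, IsSymmSndFDerivAt ℝ U z := fun z =>
    hu2.contDiffAt.isSymmSndFDerivAt (by simp)
  have hu' : u = fun s y => U (s, y) := funext fun s => funext fun y => hv s y
  subst hu'
  have e1 : ∀ t x, ut (fun s y => U (s, y)) t x = fderiv ℝ U (t, x) (1, 0) :=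
    fun t x => (curve_t hdU t x).deriv
  have h2 : ∀ t x, pd j (fun y => U (t, y)) x = fderiv ℝ U (t, x) (0, e3 j) := fun t x => by
    rw [pd, (curve_x hdU t x).fderiv]; simp
  refine ⟨by rw [e1]; exact curve_t hdU t x, ?_⟩
  have e2 : pd j (ut (fun s y => U (s, y)) t) x
      = fderiv ℝ (fderiv ℝ U) (t, x) (0, e3 j) (1, 0) := by
    have h := (curve_x hd2 t x).clm_apply (hasFDerivAt_const ((1 : ℝ), (0 : E3)) x)
    have : ut (fun s y => U (s, y)) t = fun y => fderiv ℝ U (t, y) (1, 0) := funext (e1 t)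
    rw [pd, this, h.fderiv]; simp
  rw [e2, hs (t, x)]
  simp only [h2]
  have := (curve_t hd2 t x).clm_apply (hasDerivAt_const t ((0 : ℝ), e3 j))
  simpa using this

theorem unif {a b : ℝ} {u : ℝ → E3 → ℂ} (h : IsSchwartzSolution a b 1 u) {T : ℝ} (hT : 0 < T) :
    ∃ C, 0 ≤ C ∧ ∀ t ∈ Set.Icc (-T) T, ∀ x : E3,
      ‖u t x‖ ≤ C * (1 + ‖x‖) ^ (-(4:ℝ)) ∧ ‖ut u t x‖ ≤ C * (1 + ‖x‖) ^ (-(4:ℝ)) ∧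
      (∀ j, ‖pd j (u t) x‖ ≤ C * (1 + ‖x‖) ^ (-(4:ℝ))) ∧
      ∀ j, ‖pd j (ut u t) x‖ ≤ C * (1 + ‖x‖) ^ (-(4:ℝ)) := by
  obtain ⟨C1, h1⟩ := h.unif_bound 0 0 T hT
  obtain ⟨C2, h2⟩ := h.unif_bound 4 0 T hT
  obtain ⟨C3, h3⟩ := h.unif_bound 0 1 T hT
  obtain ⟨C4, h4⟩ := h.unif_bound 4 1 T hT
  set C := |C1| + |C2| + |C3| + |C4| with hC
  have a1 := abs_nonneg C1
  have a2 := abs_nonneg C2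
  have a3 := abs_nonneg C3
  have a4 := abs_nonneg C4
  have b1 := le_abs_self C1
  have b2 := le_abs_self C2
  have b3 := le_abs_self C3
  have b4 := le_abs_self C4
  refine ⟨8 * (C + C), by positivity, fun t ht x => ?_⟩
  have key : ∀ y : ℝ, 0 ≤ y → y ≤ C → ‖x‖ ^ 4 * y ≤ C → y ≤ 8 * (C + C) * (1 + ‖x‖) ^ (-(4:ℝ)) := by
    intro y hy0 hy1 hy2
    have hx : 0 < 1 + ‖x‖ := by positivity
    rw [Real.rpow_neg hx.le, ← div_eq_mul_inv, le_div_iff₀ (by positivity)]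
    have e : (1 + ‖x‖) ^ (4:ℝ) = (1 + ‖x‖) ^ 4 := by
      rw [← Real.rpow_natCast]; norm_num
    rw [e]
    have : (1 + ‖x‖) ^ 4 ≤ 8 * (1 + ‖x‖ ^ 4) := by
      have := add_pow_le (zero_le_one) (norm_nonneg x) 4
      norm_num at this; linarith
    calc y * (1 + ‖x‖) ^ 4 ≤ y * (8 * (1 + ‖x‖ ^ 4)) := by gcongr
      _ = 8 * (y + ‖x‖ ^ 4 * y) := by ring
      _ ≤ _ := by linarith
  have k1 := h1 t ht x
  have k2 := h2 t ht x
  have k3 := h3 t ht x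
  have k4 := h4 t ht x
  have eut : (fun y => deriv (fun s => u s y) t) = ut u t := rfl
  rw [eut] at k1 k2 k3 k4
  simp only [norm_iteratedFDeriv_zero, norm_iteratedFDeriv_one, pow_zero, one_mul] at k1 k2 k3 k4
  have ne : ∀ j, ‖e3 j‖ = 1 := fun j => by simp [e3]
  have pdl : ∀ (f : E3 → ℂ) j, ‖pd j f x‖ ≤ ‖fderiv ℝ f x‖ := fun f j => by
    have := (fderiv ℝ f x).le_opNorm (e3 j)
    rwa [ne, mul_one] at this
  have n4 : 0 ≤ ‖x‖ ^ 4 := by positivity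
  have m1 := norm_nonneg (u t x)
  have m2 := norm_nonneg (ut u t x)
  have m3 := norm_nonneg (fderiv ℝ (u t) x)
  have m4 := norm_nonneg (fderiv ℝ (ut u t) x)
  have q1 := mul_nonneg n4 m1
  have q2 := mul_nonneg n4 m2
  have q3 := mul_nonneg n4 m3
  have q4 := mul_nonneg n4 m4
  exact ⟨key _ m1 (by linarith) (by linarith), key _ m2 (by linarith) (by linarith),
    fun j => (pdl _ j).trans (key _ m3 (by linarith) (by linarith)),
    fun j => (pdl _ j).trans (key _ m4 (by linarith) (by linarith))⟩

def mm (R : ℝ) (u : ℝ → E3 → ℂ) (t : ℝ) (x : E3) : ℝ :=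
  ∑ j, 2 * (om R j x * ((u t x).re * (pd j (u t) x).im - (u t x).im * (pd j (u t) x).re))

def mtt (R : ℝ) (u : ℝ → E3 → ℂ) (t : ℝ) (x : E3) : ℝ :=
  MT R (fun x => (u t x).re) (fun x => (u t x).im) (fun x => (ut u t x).re)
      (fun x => (ut u t x).im) (fun j x => (pd j (u t) x).re) (fun j x => (pd j (u t) x).im)
      (fun j x => (pd j (ut u t) x).re) (fun j x => (pd j (ut u t) x).im) x

theorem mm_deriv {u : ℝ → E3 → ℂ} (hu : ContDiff ℝ (⊤ : ℕ∞) (Function.uncurry u)) (R : ℝ) (t : ℝ)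
    (x : E3) : HasDerivAt (fun s => mm R u s x) (mtt R u t x) t := by
  have hre : ∀ {f : ℝ → ℂ} {f' : ℂ}, HasDerivAt f f' t → HasDerivAt (fun s => (f s).re) f'.re t :=
    fun h => Complex.reCLM.hasFDerivAt.comp_hasDerivAt t h
  have him : ∀ {f : ℝ → ℂ} {f' : ℂ}, HasDerivAt f f' t → HasDerivAt (fun s => (f s).im) f'.im t :=
    fun h => Complex.imCLM.hasFDerivAt.comp_hasDerivAt t h
  unfold mm mtt MT
  refine HasDerivAt.fun_sum fun j _ => ?_
  obtain ⟨h1, h2⟩ := mixed hu j t x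
  exact ((((hre h1).mul (him h2)).sub ((him h1).mul (hre h2))).const_mul (om R j x)).const_mul 2

theorem nc_mm {a b : ℝ} (hb0 : 0 < b) (hb1 : b < 1) {u : ℝ → E3 → ℂ}
    (h : IsSchwartzSolution a b 1 u) {R : ℝ} (hR : 0 < R) (t : ℝ) : Nc (mm R u t) := by
  have s := snap_of_sol hb0 hb1 h t
  exact Nc.sum3 fun j => Nc.mulr (Bd.const 2) (Nc.mulr (bd_om hR j)
    ((s.np.mul (s.nQ j).1).sub (s.nq.mul (s.nP j).1)))

theorem M_deriv {a b : ℝ} (hb0 : 0 < b) (hb1 : b < 1) {u : ℝ → E3 → ℂ}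
    (h : IsSchwartzSolution a b 1 u) {R : ℝ} (hR : 0 < R) (t : ℝ) :
    HasDerivAt (fun s => ∫ x, mm R u s x) (∫ x, mtt R u t x) t := by
  have hT : 0 < |t| + 1 := by positivity
  obtain ⟨C, hC0, hC⟩ := unif h hT
  refine (hasDerivAt_integral_of_dominated_loc_of_deriv_le (s := Set.Icc (-(|t| + 1)) (|t| + 1))
    (bound := fun x : E3 => 24 * C ^ 2 * (1 + ‖x‖) ^ (-(4:ℝ))) ?_ ?_ ?_ ?_ ?_ ?_ ?_).2
  · apply Icc_mem_nhds
    · linarith [neg_abs_le t]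
    · linarith [le_abs_self t]
  · exact Eventually.of_forall fun s => (nc_mm hb0 hb1 h hR s).1.1.aestronglyMeasurable
  · exact (nc_mm hb0 hb1 h hR t).2
  · exact ((snap_of_sol hb0 hb1 h t).nc_MT hR).1.1.aestronglyMeasurable
  · refine Eventually.of_forall fun x s hs => ?_
    obtain ⟨h1, h2, h3, h4⟩ := hC s hs x
    set ψ := (1 + ‖x‖) ^ (-(4:ℝ)) with hψ
    have ψ0 : 0 ≤ ψ := by positivity
    have ψ1 : ψ ≤ 1 := Real.rpow_le_one_of_one_le_of_nonpos (by simp) (by norm_num)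
    have B0 : 0 ≤ C * ψ := by positivity
    have pr : ∀ α β : ℝ, |α| ≤ C * ψ → |β| ≤ C * ψ → |α * β| ≤ C ^ 2 * ψ := by
      intro α β hα hβ
      rw [abs_mul]
      calc |α| * |β| ≤ (C * ψ) * (C * ψ) := mul_le_mul hα hβ (abs_nonneg _) B0
        _ = C ^ 2 * ψ * ψ := by ring
        _ ≤ C ^ 2 * ψ * 1 := by gcongr
        _ = _ := by ring
    have re : ∀ {z : ℂ}, ‖z‖ ≤ C * ψ → |z.re| ≤ C * ψ := fun hz => (Complex.abs_re_le_norm _).trans hz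
    have im : ∀ {z : ℂ}, ‖z‖ ≤ C * ψ → |z.im| ≤ C * ψ := fun hz => (Complex.abs_im_le_norm _).trans hz
    have main : ∀ j, |2 * (om R j x * ((ut u s x).re * (pd j (u s) x).im
        + (u s x).re * (pd j (ut u s) x).im - ((ut u s x).im * (pd j (u s) x).re
          + (u s x).im * (pd j (ut u s) x).re)))| ≤ 8 * C ^ 2 * ψ := by
      intro j
      have k1 := pr _ _ (re h2) (im (h3 j))
      have k2 := pr _ _ (re h1) (im (h4 j))
      have k3 := pr _ _ (im h2) (re (h3 j))
      have k4 := pr _ _ (im h1) (re (h4 j))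
      rw [abs_mul, abs_mul]
      have o := om_le hR j x
      have : |(ut u s x).re * (pd j (u s) x).im
        + (u s x).re * (pd j (ut u s) x).im - ((ut u s x).im * (pd j (u s) x).re
          + (u s x).im * (pd j (ut u s) x).re)| ≤ 4 * (C ^ 2 * ψ) := by
        rw [abs_le] at *
        constructor <;> linarith
      calc |(2:ℝ)| * (|om R j x| * _) ≤ |(2:ℝ)| * (1 * (4 * (C ^ 2 * ψ))) := by gcongr
        _ = _ := by norm_num; ring
    rw [Real.norm_eq_abs]
    unfold mtt MT
    refine (Finset.abs_sum_le_sum_abs _ _).trans ?_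
    refine (Finset.sum_le_sum fun j _ => main j).trans (le_of_eq ?_)
    simp; ring
  · exact (integrable_one_add_norm (by simp; norm_num)).const_mul _
  · exact Eventually.of_forall fun x s _ => mm_deriv h.smooth R s x

theorem M_bound {a b : ℝ} (hb0 : 0 < b) (hb1 : b < 1) {u : ℝ → E3 → ℂ}
    (h : IsSchwartzSolution a b 1 u) {R : ℝ} (hR : 0 < R) {E : ℝ} (t : ℝ)
    (hE : ∫ x : E3, (‖u t x‖ ^ 2 + ∑ j : Fin 3, ‖pd j (u t) x‖ ^ 2) ≤ E ^ 2) :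
    |∫ x, mm R u t x| ≤ E ^ 2 ∧ ∫ x, ((u t x).re ^ 2 + (u t x).im ^ 2) ≤ E ^ 2 := by
  have s := snap_of_sol hb0 hb1 h t
  have e : ∀ z : ℂ, ‖z‖ ^ 2 = z.re ^ 2 + z.im ^ 2 := fun z => by
    rw [Complex.sq_norm, Complex.normSq_apply]; ring
  have ni : Nc (fun x : E3 => (‖u t x‖ ^ 2 + ∑ j : Fin 3, ‖pd j (u t) x‖ ^ 2)) := by
    simp only [e]
    exact ((s.np.pow 1).add (s.nq.pow 1)).add (Nc.sum3 fun j => ((s.nP j).pow 1).add ((s.nQ j).pow 1))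
  constructor
  · refine le_trans ?_ hE
    rw [← Real.norm_eq_abs]
    refine norm_integral_le_of_norm_le ni.2 (Eventually.of_forall fun x => ?_)
    rw [Real.norm_eq_abs]
    have hs := om_sum hR x
    have cP := cs3 _ _ _ (pd 0 (u t) x).re (pd 1 (u t) x).re (pd 2 (u t) x).re _ hs
    have cQ := cs3 _ _ _ (pd 0 (u t) x).im (pd 1 (u t) x).im (pd 2 (u t) x).im _ hs
    have w0 : 0 ≤ R ^ 2 * sg R x ^ 2 := by positivity
    simp only [mm, e, Fin.sum_univ_three]
    set VP := (pd 0 (u t) x).re ^ 2 + (pd 1 (u t) x).re ^ 2 + (pd 2 (u t) x).re ^ 2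
    set VQ := (pd 0 (u t) x).im ^ 2 + (pd 1 (u t) x).im ^ 2 + (pd 2 (u t) x).im ^ 2
    have v1 : 0 ≤ R ^ 2 * sg R x ^ 2 * VP := by positivity
    have v2 : 0 ≤ R ^ 2 * sg R x ^ 2 * VQ := by positivity
    set WP := om R 0 x * (pd 0 (u t) x).re + om R 1 x * (pd 1 (u t) x).re + om R 2 x * (pd 2 (u t) x).re with hWP
    set WQ := om R 0 x * (pd 0 (u t) x).im + om R 1 x * (pd 1 (u t) x).im + om R 2 x * (pd 2 (u t) x).im with hWQ
    have g1 := sq_nonneg ((u t x).re - WQ)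
    have g2 := sq_nonneg ((u t x).im + WP)
    have g3 := sq_nonneg ((u t x).re + WQ)
    have g4 := sq_nonneg ((u t x).im - WP)
    have ee : ∀ j, 2 * (om R j x * ((u t x).re * (pd j (u t) x).im - (u t x).im * (pd j (u t) x).re))
      = 2 * (u t x).re * (om R j x * (pd j (u t) x).im) - 2 * (u t x).im * (om R j x * (pd j (u t) x).re) := fun j => by ring
    have e2 : 2 * (om R 0 x * ((u t x).re * (pd 0 (u t) x).im - (u t x).im * (pd 0 (u t) x).re))
      + 2 * (om R 1 x * ((u t x).re * (pd 1 (u t) x).im - (u t x).im * (pd 1 (u t) x).re))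
      + 2 * (om R 2 x * ((u t x).re * (pd 2 (u t) x).im - (u t x).im * (pd 2 (u t) x).re))
      = 2 * (u t x).re * WQ - 2 * (u t x).im * WP := by rw [hWP, hWQ]; ring
    rw [e2, abs_le]
    constructor <;> simp only [VP, VQ] at * <;> nlinarith
  · refine le_trans ?_ hE
    refine integral_mono ((s.np.pow 1).add (s.nq.pow 1)).2 ni.2 fun x => ?_
    simp only [e (u t x)]
    have : 0 ≤ ∑ j : Fin 3, ‖pd j (u t) x‖ ^ 2 := by positivity
    linarith

theorem N_le {a b : ℝ} (ha : -(1/4 : ℝ) < a) (hb0 : 0 < b) (hb1 : b < 1) {u : ℝ → E3 → ℂ}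
    (h : IsSchwartzSolution a b 1 u) {R : ℝ} (hR : 0 < R) {E : ℝ} (t : ℝ)
    (hE : ∫ x : E3, (‖u t x‖ ^ 2 + ∑ j : Fin 3, ‖pd j (u t) x‖ ^ 2) ≤ E ^ 2) :
    R⁻¹ * (∫ x in Metric.closedBall (0 : E3) (R / 4), ‖u t x‖ ^ 4 * ‖x‖ ^ (-b))
      - 7 * (R⁻¹) ^ 3 * E ^ 2 ≤ ∫ x, mtt R u t x := by
  have c := (snap_of_sol hb0 hb1 h t).core hb0 hb1 ha hR
  have m := (M_bound hb0 hb1 h hR t hE).2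
  have e : ∀ x : E3, hh b (fun x => (u t x).re) (fun x => (u t x).im) x
      = ‖u t x‖ ^ 4 * ‖x‖ ^ (-b) := by
    intro x
    have : ‖u t x‖ ^ 2 = (u t x).re ^ 2 + (u t x).im ^ 2 := by
      rw [Complex.sq_norm, Complex.normSq_apply]; ring
    simp only [hh, gg]
    rw [← this]; ring
  simp only [e] at c
  have k : 0 ≤ 7 * (R⁻¹) ^ 3 := by positivity
  have := mul_le_mul_of_nonneg_left m k
  unfold mtt
  linarith

theorem morawetz_main (a b : ℝ) (ha : -(1/4 : ℝ) < a)
    (hb0 : 0 < b) (hb1 : b < 1) (E : ℝ) (hE : 0 < E) :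
    ∃ C R₀ : ℝ, 0 < C ∧ 1 < R₀ ∧ ∀ u : ℝ → E3 → ℂ, IsSchwartzSolution a b 1 u →
      (∀ t : ℝ, ∫ x : E3,
          (‖u t x‖ ^ 2 + ∑ j : Fin 3, ‖pd j (u t) x‖ ^ 2) ≤ E ^ 2) →
      ∀ T : ℝ, 0 < T → ∀ R : ℝ, R₀ ≤ R →
      (1 / T) * ∫ t in Set.Ioc (0 : ℝ) T,
          ∫ x in Metric.closedBall (0 : E3) (R / 4), ‖u t x‖ ^ 4 * ‖x‖ ^ (-b)
        ≤ C * (R / T + R ^ (-b)) := by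
  refine ⟨7 * E ^ 2, 2, by positivity, by norm_num, fun u h hu T hT R hR2 => ?_⟩
  have hR : 0 < R := by linarith
  set N : ℝ → ℝ := fun t =>
    ∫ x in Metric.closedBall (0 : E3) (R / 4), ‖u t x‖ ^ 4 * ‖x‖ ^ (-b) with hN
  have hRb : 0 ≤ R ^ (-b) := by positivity
  by_cases hi : IntegrableOn N (Set.Ioc 0 T)
  · have hφ : IntegrableOn (fun t => R⁻¹ * N t - 7 * (R⁻¹) ^ 3 * E ^ 2) (Set.Ioc 0 T) :=
      (hi.const_mul _).sub (integrableOn_const (by simp))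
    have key := intervalIntegral.integral_le_sub_of_hasDeriv_right_of_le hT.le
      (g := fun s => ∫ x, mm R u s x) (g' := fun t => ∫ x, mtt R u t x)
      (φ := fun t => R⁻¹ * N t - 7 * (R⁻¹) ^ 3 * E ^ 2)
      (fun t _ => (M_deriv hb0 hb1 h hR t).continuousAt.continuousWithinAt)
      (fun t _ => (M_deriv hb0 hb1 h hR t).hasDerivWithinAt)
      ((integrableOn_Icc_iff_integrableOn_Ioc (by simp)).mpr hφ)
      (fun t _ => N_le ha hb0 hb1 h hR t (hu t))
    rw [intervalIntegral.integral_of_le hT.le, integral_sub (hi.const_mul _)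
      (integrableOn_const (by simp)), integral_const_mul] at key
    simp only [integral_const, smul_eq_mul, measureReal_restrict_apply_univ, Real.volume_real_Ioc_of_le hT.le, sub_zero] at key
    have b1 := abs_le.mp (M_bound hb0 hb1 h hR T (hu T)).1
    have b2 := abs_le.mp (M_bound hb0 hb1 h hR 0 (hu 0)).1
    set I := ∫ t in Set.Ioc 0 T, N t with hI
    have k1 : R⁻¹ * I ≤ 2 * E ^ 2 + T * (7 * R⁻¹ ^ 3 * E ^ 2) := by linarith
    have k2 : I ≤ R * (2 * E ^ 2 + T * (7 * R⁻¹ ^ 3 * E ^ 2)) := by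
      rwa [inv_mul_le_iff₀ hR] at k1
    have k3 : R⁻¹ ^ 2 ≤ R ^ (-b) := by
      rw [inv_pow, ← Real.rpow_natCast, ← Real.rpow_neg hR.le]
      apply Real.rpow_le_rpow_of_exponent_le (by linarith)
      push_cast; linarith
    have k4 : R * (2 * E ^ 2 + T * (7 * R⁻¹ ^ 3 * E ^ 2)) = 2 * E ^ 2 * R + 7 * E ^ 2 * T * R⁻¹ ^ 2 := by
      field_simp
    rw [k4] at k2
    have k5 : 7 * E ^ 2 * T * R⁻¹ ^ 2 ≤ 7 * E ^ 2 * T * R ^ (-b) := by gcongr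
    have k6 : 2 * E ^ 2 * R ≤ 7 * E ^ 2 * R := by gcongr; norm_num
    rw [one_div, inv_mul_le_iff₀ hT]
    have : T * (7 * E ^ 2 * (R / T + R ^ (-b))) = 7 * E ^ 2 * R + 7 * E ^ 2 * T * R ^ (-b) := by
      field_simp
    rw [this]; linarith
  · rw [integral_undef hi, mul_zero]
    positivity

/-- **Morawetz estimate (defocusing case `λ = 1`).** There are constants
`C > 0` and `R₀ > 1`, depending only on `a`, `b` and `E`, such that for every
uniformly `H¹`-bounded smooth Schwartz solution, every `T > 0` and every
`R ≥ R₀`,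
`(1/T) ∫_0^T ∫_{|x| ≤ R/4} |u(t,x)|⁴/|x|^b dx dt ≤ C (R/T + R^{−b})`. -/
theorem morawetz_estimate (a b : ℝ) (ha : -(1/4 : ℝ) < a)
    (hb0 : 0 < b) (hb1 : b < 1) (E : ℝ) (hE : 0 < E) :
    ∃ C R₀ : ℝ, 0 < C ∧ 1 < R₀ ∧ ∀ u : ℝ → E3 → ℂ, IsSchwartzSolution a b 1 u →
      (∀ t : ℝ, ∫ x : E3,
          (‖u t x‖ ^ 2 + ∑ j : Fin 3, ‖pd j (u t) x‖ ^ 2) ≤ E ^ 2) →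
      ∀ T : ℝ, 0 < T → ∀ R : ℝ, R₀ ≤ R →
      (1 / T) * ∫ t in Set.Ioc (0 : ℝ) T,
          ∫ x in Metric.closedBall (0 : E3) (R / 4), ‖u t x‖ ^ 4 * ‖x‖ ^ (-b)
        ≤ C * (R / T + R ^ (-b)) := by
  exact morawetz_main a b ha hb0 hb1 E hE
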